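/- Let G=(V,E) be a cyclically 4-edge-connected cubic graph, let X ⊂ V with |X| ≥ 2, let H be a component of G − X, and let f = xz ∈ E with x ∈ X and z ∈ V(H). If |E(v,X) \ {f}| ≤ 1 for every v ∈ V(H), then there exist distinct vertices y, y₁, y₂ ∈ V(H) \ {z} with E(y,X) ≠ ∅ and E(y_i, X) ≠ ∅ for i = 1, 2, such that for i = 1, 2 there exists a path P_i ⊆ H − z with ends y and y_i which is peripheral in H and contains no internal vertex with a neighbor in X; moreover, the edge of P₁ incident with y is distinct from the edge of P₂ incident with y. -/

import Mathlib

open scoped Classical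

/-- A multigraph with an orientation: each edge `e` has a source `src e` and a target `tgt e`.
Loops and parallel edges are allowed. -/
structure Multigraph (V E : Type) where
  src : E → V
  tgt : E → V

namespace Multigraph

variable {V E : Type}

/-- `u` and `v` are joined by some edge satisfying the predicate `P`. -/
def adjVia (G : Multigraph V E) (P : E → Prop) (u v : V) : Prop :=
  ∃ e, P e ∧ ((G.src e = u ∧ G.tgt e = v) ∨ (G.src e = v ∧ G.tgt e = u))

/-- `v` is reachable from `u` using only edges satisfying `P`. -/
def Reaches (G : Multigraph V E) (P : E → Prop) : V → V → Prop :=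
  Relation.ReflTransGen (G.adjVia P)

/-- The graph is connected when only edges satisfying `P` are kept (all edges deleted
whose predicate fails, all vertices kept). -/
def ConnectedVia (G : Multigraph V E) (P : E → Prop) : Prop :=
  Nonempty V ∧ ∀ u v : V, G.Reaches P u v

def Connected (G : Multigraph V E) : Prop :=
  G.ConnectedVia fun _ => True

/-- `G` is `k`-edge-connected: it is connected and has no edge cut of size less than `k`;
equivalently, deleting any set of fewer than `k` edges leaves it connected. -/
def EdgeConnected (G : Multigraph V E) (k : ℕ) : Prop :=
  ∀ S : Set E, S.ncard < k → G.ConnectedVia fun e => e ∉ S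

/-- The degree of a vertex (loops counted twice). -/
noncomputable def degree (G : Multigraph V E) (v : V) : ℕ :=
  {e | G.src e = v}.ncard + {e | G.tgt e = v}.ncard

/-- Every vertex has degree exactly 3. -/
def Cubic (G : Multigraph V E) : Prop :=
  ∀ v : V, G.degree v = 3

/-- `φ : E → Γ` is a flow: at every vertex, the sum over outgoing edges equals the
sum over incoming edges. -/
def IsFlow [Fintype E] {Γ : Type} [AddCommGroup Γ] (G : Multigraph V E) (φ : E → Γ) : Prop :=
  ∀ v : V, (∑ e : E, if G.src e = v then φ e else 0) = ∑ e : E, if G.tgt e = v then φ e else 0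

/-- The vertex `v` is an endpoint of some edge of `C`. -/
def touches (G : Multigraph V E) (C : Set E) (v : V) : Prop :=
  ∃ e ∈ C, G.src e = v ∨ G.tgt e = v

/-- An edge set `C` is (the edge set of) a cycle: it is nonempty, every vertex it touches
has degree exactly 2 in it, and it is connected. -/
def IsCycle (G : Multigraph V E) (C : Set E) : Prop :=
  C.Nonempty ∧
  (∀ v : V, G.touches C v →
    ({e ∈ C | G.src e = v}.ncard + {e ∈ C | G.tgt e = v}.ncard = 2)) ∧
  (∀ u v : V, G.touches C u → G.touches C v → G.Reaches (· ∈ C) u v)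

/-- `R` is `k`-closed: every cycle with at least one edge outside `R` has at least
`k+1` edges outside `R`. -/
def Closed (G : Multigraph V E) (k : ℕ) (R : Set E) : Prop :=
  ∀ C : Set E, G.IsCycle C → (C \ R).Nonempty → k + 1 ≤ (C \ R).ncard

/-- The `k`-closure `⟨S⟩ₖ` of `S` : the minimal `k`-closed set containing `S`
(the family of `k`-closed sets is closed under intersections). -/
def kClosure (G : Multigraph V E) (k : ℕ) (S : Set E) : Set E :=
  ⋂₀ {R : Set E | S ⊆ R ∧ G.Closed k R}

/-- `S` is a `k`-base: its `k`-closure is the whole edge set. -/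
def IsBase (G : Multigraph V E) (k : ℕ) (S : Set E) : Prop :=
  G.kClosure k S = Set.univ

/-- An edge set `S` is peripheral if `G − S` is connected. -/
def Peripheral (G : Multigraph V E) (S : Set E) : Prop :=
  G.ConnectedVia fun e => e ∉ S

/-- The spanning subgraph `(V, F)` is a forest, i.e. contains no cycle. -/
def IsForest (G : Multigraph V E) (F : Set E) : Prop :=
  ∀ C : Set E, G.IsCycle C → ¬ C ⊆ F

/-- `vs`, `es` describe a path: distinct vertices `vs 0, …, vs n` and distinct edges
`es 0, …, es (n-1)` where `es i` joins `vs i` and `vs (i+1)`. -/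
def IsPath (G : Multigraph V E) {n : ℕ} (vs : Fin (n + 1) → V) (es : Fin n → E) : Prop :=
  Function.Injective vs ∧ Function.Injective es ∧
  ∀ i : Fin n,
    (G.src (es i) = vs i.castSucc ∧ G.tgt (es i) = vs i.succ) ∨
    (G.src (es i) = vs i.succ ∧ G.tgt (es i) = vs i.castSucc)

/-- The edge `e` has `y` as one endpoint and its other endpoint in `X`,
i.e. `e ∈ E(y, X)`. -/
def joins (G : Multigraph V E) (e : E) (y : V) (X : Set V) : Prop :=
  (G.src e = y ∧ G.tgt e ∈ X) ∨ (G.tgt e = y ∧ G.src e ∈ X)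

/-- `W` is the vertex set of a connected component of `G − X`. -/
def IsComponent (G : Multigraph V E) (X W : Set V) : Prop :=
  W.Nonempty ∧ Disjoint W X ∧
  (∀ u ∈ W, ∀ v : V, v ∉ X → G.adjVia (fun _ => True) u v → v ∈ W) ∧
  (∀ u ∈ W, ∀ v ∈ W, G.Reaches (fun e => G.src e ∉ X ∧ G.tgt e ∉ X) u v)

/-- The subgraph induced on `W`, with only those of its edges satisfying `P` kept,
is connected. -/
def ConnectedOn (G : Multigraph V E) (W : Set V) (P : E → Prop) : Prop :=
  ∀ u ∈ W, ∀ v ∈ W, G.Reaches (fun e => P e ∧ G.src e ∈ W ∧ G.tgt e ∈ W) u v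

/-- The subgraph induced on `W` is `k`-edge-connected. -/
def EdgeConnectedOn (G : Multigraph V E) (W : Set V) (k : ℕ) : Prop :=
  ∀ S : Set E, S.ncard < k → G.ConnectedOn W fun e => e ∉ S

/-- Some cycle lies entirely inside the vertex set `X`. -/
def HasCycleIn (G : Multigraph V E) (X : Set V) : Prop :=
  ∃ C : Set E, G.IsCycle C ∧ ∀ e ∈ C, G.src e ∈ X ∧ G.tgt e ∈ X

/-- The edge cut `E(X, V \ X)`. -/
def cutEdges (G : Multigraph V E) (X : Set V) : Set E :=
  {e | (G.src e ∈ X ∧ G.tgt e ∉ X) ∨ (G.src e ∉ X ∧ G.tgt e ∈ X)}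

/-- A cubic graph is cyclically `k`-edge-connected if every edge cut separating two
cycle-containing parts has at least `k` edges. -/
def CyclicallyEdgeConnected (G : Multigraph V E) (k : ℕ) : Prop :=
  ∀ X : Set V, G.HasCycleIn X → G.HasCycleIn Xᶜ → k ≤ (G.cutEdges X).ncard

/-- `G` is 3-connected: more than 3 vertices, connected, and still connected after
deleting any two vertices. -/
def ThreeConnected [Fintype V] (G : Multigraph V E) : Prop :=
  3 < Fintype.card V ∧ G.Connected ∧
    ∀ u v : V, G.ConnectedOn {w : V | w ≠ u ∧ w ≠ v} fun _ => True

/-- The graph `G − r` obtained by deleting the vertex `r` and all incident edges. -/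
def deleteVertex (G : Multigraph V E) (r : V) :
    Multigraph {v : V // v ≠ r} {e : E // G.src e ≠ r ∧ G.tgt e ≠ r} where
  src e := ⟨G.src e.1, e.2.1⟩
  tgt e := ⟨G.tgt e.1, e.2.2⟩

end Multigraph

/-!
Let `W` be a part of a subcubic 3-edge-connected graph, and suppose first that `W` is
2-edge-connected. Let `A` be a connected edge set containing `t`, and let `F` be an edge set
disjoint from `A` which connects `t` to a boundary vertex outside `A`. Choose such an `F` for which
the component `K` of `W - F` containing `A` is largest. If `K` were not all of `W`, one could
reroute `F` through a component `D` of `W - K`, keeping at most two of the edges between `D` and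
`K`, and at most one if `D` meets the boundary; the connectivity assumptions provide a further edge
between `D` and `K`, so `K` would grow. Hence a shortest path in `F` from `t` to a boundary vertex
outside `A` is peripheral, and its inner vertices avoid the boundary because all degrees are at
most 3.

As `W` has no cut vertex, it contains two edge-disjoint connected parts which share a boundary
vertex `t`, both meet `z`, and each contain a boundary vertex missed by the other. The first path
avoids one part; the second avoids the first path and the other part. Cyclic 4-edge-connectivity
provides the required three boundary vertices apart from `z`. If `W` has a bridge, then the part
behind the bridge, with the end of the bridge in the role of `z`, is again of the same kind.
-/

namespace Multigraph

variable {V E : Type} {G : Multigraph V E}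

/-! ### Incidence -/

/-- The edge `e` has ends `a` and `b`, in either orientation. This is the relation spelled out in
`adjVia` and `IsPath`, with which it agrees definitionally. -/
def IsLink (G : Multigraph V E) (e : E) (a b : V) : Prop :=
  (G.src e = a ∧ G.tgt e = b) ∨ (G.src e = b ∧ G.tgt e = a)

/-- The vertex `v` is an end of the edge `e`. -/
def Inc (G : Multigraph V E) (e : E) (v : V) : Prop := G.src e = v ∨ G.tgt e = v

/-- The set of ends of the edges in `A`. -/
def verts (G : Multigraph V E) (A : Set E) : Set V := {v | ∃ e ∈ A, G.Inc e v}

/-- The edge set of the subgraph induced on `S`. -/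
def within (G : Multigraph V E) (S : Set V) : Set E := {e | G.src e ∈ S ∧ G.tgt e ∈ S}

/-- The vertices of `W` with a neighbour outside `W`. When `W` is a component of `G - X` these are
the vertices of `W` with a neighbour in `X`. -/
def boundary (G : Multigraph V E) (W : Set V) : Set V := {v ∈ W | ∃ e, G.joins e v Wᶜ}

variable {e : E} {a b c d u v w : V} {A B F : Set E} {S W W' X : Set V} {P Q : E → Prop}

lemma isLink_src_tgt (G : Multigraph V E) (e : E) : G.IsLink e (G.src e) (G.tgt e) :=
  .inl ⟨rfl, rfl⟩

lemma IsLink.symm (h : G.IsLink e a b) : G.IsLink e b a := Or.symm h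

lemma IsLink.inc_left (h : G.IsLink e a b) : G.Inc e a := h.imp And.left And.right

lemma IsLink.inc_right (h : G.IsLink e a b) : G.Inc e b := h.symm.inc_left

lemma Inc.exists_isLink (h : G.Inc e v) : ∃ w, G.IsLink e v w := by
  rcases h with rfl | rfl
  exacts [⟨_, G.isLink_src_tgt e⟩, ⟨_, (G.isLink_src_tgt e).symm⟩]

lemma IsLink.eq_and_eq_or_eq_and_eq (h : G.IsLink e a b) (h' : G.IsLink e c d) :
    a = c ∧ b = d ∨ a = d ∧ b = c := by
  unfold IsLink at h h'
  grind

lemma IsLink.right_unique (h : G.IsLink e a b) (h' : G.IsLink e a c) : b = c := by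
  rcases h.eq_and_eq_or_eq_and_eq h' with ⟨-, h⟩ | ⟨rfl, rfl⟩
  exacts [h, rfl]

lemma joins_iff : G.joins e v X ↔ ∃ w ∈ X, G.IsLink e v w := by
  unfold joins IsLink
  grind

lemma IsLink.joins (h : G.IsLink e v w) (hw : w ∈ X) : G.joins e v X := joins_iff.2 ⟨w, hw, h⟩

lemma joins.inc (h : G.joins e v X) : G.Inc e v := h.imp And.left And.left

lemma joins.mono (h : G.joins e v X) (hX : X ⊆ S) : G.joins e v S :=
  h.imp (And.imp_right (@hX _)) (And.imp_right (@hX _))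

lemma verts_mono (h : A ⊆ B) : G.verts A ⊆ G.verts B := fun _ ⟨e, he, hv⟩ => ⟨e, h he, hv⟩

lemma IsLink.left_mem_verts (h : G.IsLink e a b) (he : e ∈ A) : a ∈ G.verts A :=
  ⟨e, he, h.inc_left⟩

lemma IsLink.mem_within_iff (h : G.IsLink e a b) : e ∈ G.within S ↔ a ∈ S ∧ b ∈ S := by
  rcases h with ⟨rfl, rfl⟩ | ⟨rfl, rfl⟩
  exacts [Iff.rfl, and_comm]

lemma within_mono (h : S ⊆ W) : G.within S ⊆ G.within W := fun _ he => ⟨h he.1, h he.2⟩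

lemma verts_subset_iff : G.verts A ⊆ S ↔ A ⊆ G.within S := by
  constructor
  · exact fun h e he => ⟨h ⟨e, he, .inl rfl⟩, h ⟨e, he, .inr rfl⟩⟩
  · rintro h v ⟨e, he, rfl | rfl⟩
    exacts [(h he).1, (h he).2]

lemma mem_cutEdges_iff : e ∈ G.cutEdges S ↔ ∃ a ∈ S, ∃ b ∉ S, G.IsLink e a b := by
  unfold cutEdges IsLink
  grind

lemma IsLink.mem_cutEdges_iff (h : G.IsLink e a b) :
    e ∈ G.cutEdges S ↔ (a ∈ S ∧ b ∉ S) ∨ (a ∉ S ∧ b ∈ S) := by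
  rcases h with ⟨rfl, rfl⟩ | ⟨rfl, rfl⟩
  · rfl
  · exact Or.comm.trans (or_congr And.comm And.comm)

lemma cutEdges_compl (G : Multigraph V E) (S : Set V) : G.cutEdges Sᶜ = G.cutEdges S := by
  ext e
  simp only [cutEdges, Set.mem_compl_iff, Set.mem_ofPred_eq]
  tauto

lemma disjoint_within_cutEdges (G : Multigraph V E) (S : Set V) :
    Disjoint (G.within S) (G.cutEdges S) := by
  rw [Set.disjoint_left]
  rintro e ⟨hs, ht⟩ (h | h)
  exacts [h.2 ht, h.1 hs]

lemma IsLink.mem_boundary (h : G.IsLink e a b) (ha : a ∈ W) (hb : b ∉ W) : a ∈ G.boundary W :=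
  ⟨ha, e, h.joins hb⟩

lemma boundary_subset : G.boundary W ⊆ W := Set.sep_subset _ _

/-! ### Connected subgraphs -/

lemma Reaches.symm (h : G.Reaches P u v) : G.Reaches P v u := by
  induction h with
  | refl => exact .refl
  | tail _ hbc ih =>
    obtain ⟨e, he, hl⟩ := hbc
    exact .head ⟨e, he, hl.symm⟩ ih

lemma Reaches.trans (h : G.Reaches P u v) (h' : G.Reaches P v w) : G.Reaches P u w :=
  Relation.ReflTransGen.trans h h'

lemma Reaches.tail (h : G.Reaches P u a) (he : P e) (hl : G.IsLink e a b) : G.Reaches P u b :=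
  Relation.ReflTransGen.tail h ⟨e, he, hl⟩

lemma Reaches.mono (hPQ : ∀ e, P e → Q e) (h : G.Reaches P u v) : G.Reaches Q u v :=
  Relation.ReflTransGen.mono (fun _ _ ⟨e, he, hl⟩ => ⟨e, hPQ e he, hl⟩) _ _ h

lemma Reaches.mem_of_closed (h : G.Reaches P u v) (hu : u ∈ S)
    (hS : ∀ e a b, P e → G.IsLink e a b → a ∈ S → b ∈ S) : v ∈ S := by
  induction h with
  | refl => exact hu
  | tail _ hbc ih =>
    obtain ⟨e, he, hl⟩ := hbc
    exact hS e _ _ he hl ih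

lemma Reaches.exists_exit (h : G.Reaches P u v) (hu : u ∈ S) (hv : v ∉ S) :
    ∃ e a b, P e ∧ a ∈ S ∧ b ∉ S ∧ G.IsLink e a b := by
  by_contra! hS
  exact hv (h.mem_of_closed hu fun e a b he hl ha => by_contra fun hb => hS e a b he ha hb hl)

lemma Reaches.exists_inc (h : G.Reaches P u v) (hne : u ≠ v) : ∃ e, P e ∧ G.Inc e v := by
  obtain ⟨e, a, b, he, rfl, -, hl⟩ := h.symm.exists_exit (S := {v}) rfl hne
  exact ⟨e, he, hl.inc_left⟩

/-- The vertices reachable from `r` in the subgraph induced on `W`, using only edges satisfying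
`P`: the component of `r` there when `r ∈ W`, and `{r}` otherwise. -/
def reachIn (G : Multigraph V E) (P : E → Prop) (W : Set V) (r : V) : Set V :=
  {u | G.Reaches (fun e => P e ∧ e ∈ G.within W) r u}

variable {r : V}

lemma mem_reachIn_self : r ∈ G.reachIn P W r := .refl

lemma mem_reachIn_of_isLink (ha : a ∈ G.reachIn P W r) (he : P e) (hl : G.IsLink e a b)
    (haW : a ∈ W) (hbW : b ∈ W) : b ∈ G.reachIn P W r :=
  Reaches.tail ha ⟨he, hl.mem_within_iff.2 ⟨haW, hbW⟩⟩ hl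

lemma reachIn_subset (hr : r ∈ W) : G.reachIn P W r ⊆ W := fun _ hu =>
  Reaches.mem_of_closed hu hr fun _ _ _ he hl _ => (hl.mem_within_iff.1 he.2).2

lemma reachIn_subset_reachIn (hPQ : ∀ e ∈ G.within (G.reachIn P W r), P e → Q e)
    (hW : G.reachIn P W r ⊆ W') : G.reachIn P W r ⊆ G.reachIn Q W' r := by
  intro u hu
  refine (Reaches.mem_of_closed (S := G.reachIn P W r ∩ G.reachIn Q W' r) hu
    ⟨mem_reachIn_self, mem_reachIn_self⟩ ?_).2
  rintro e a b he hl ⟨ha, ha'⟩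
  have hb : b ∈ G.reachIn P W r := Reaches.tail ha he hl
  exact ⟨hb, mem_reachIn_of_isLink ha' (hPQ e (hl.mem_within_iff.2 ⟨ha, hb⟩) he.1) hl
    (hW ha) (hW hb)⟩

lemma reachIn_ssubset_reachIn (hPQ : ∀ e ∈ G.within (G.reachIn P W r), P e → Q e)
    (hW : G.reachIn P W r ⊆ W') (ha : a ∈ G.reachIn P W r) (hb : b ∈ W' \ G.reachIn P W r)
    (hl : G.IsLink e a b) (he : Q e) : G.reachIn P W r ⊂ G.reachIn Q W' r :=
  have h := reachIn_subset_reachIn hPQ hW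
  (Set.ssubset_iff_of_subset h).2
    ⟨b, mem_reachIn_of_isLink (h ha) he hl (hW ha) hb.1, hb.2⟩

lemma connectedOn_of_subset_reachIn (h : W ⊆ G.reachIn P W r) : G.ConnectedOn W P :=
  fun _ hu _ hv => (h hu).symm.trans (h hv)

lemma connectedOn_reachIn (G : Multigraph V E) (P : E → Prop) (W : Set V) (r : V) :
    G.ConnectedOn (G.reachIn P W r) P :=
  connectedOn_of_subset_reachIn (reachIn_subset_reachIn (fun _ _ => id) subset_rfl)

lemma ConnectedOn.mono (hPQ : ∀ e, P e → Q e) (h : G.ConnectedOn W P) : G.ConnectedOn W Q :=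
  fun u hu v hv => (h u hu v hv).mono fun e he => ⟨hPQ e he.1, he.2⟩

lemma connectedOn_iff_forall_exists_isLink : G.ConnectedOn W P ↔
    ∀ S ⊆ W, S.Nonempty → (W \ S).Nonempty → ∃ e, P e ∧ ∃ a ∈ S, ∃ b ∈ W \ S, G.IsLink e a b := by
  constructor
  · rintro h S hS ⟨u, hu⟩ ⟨v, hv, hvS⟩
    obtain ⟨e, a, b, he, ha, hb, hl⟩ := (h u (hS hu) v hv).exists_exit hu hvS
    exact ⟨e, he.1, a, ha, b, ⟨(hl.mem_within_iff.1 he.2).2, hb⟩, hl⟩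
  · intro h u hu v hv
    by_contra hnot
    obtain ⟨e, he, a, ha, b, hb, hl⟩ := h (G.reachIn P W u) (reachIn_subset hu)
      ⟨u, mem_reachIn_self⟩ ⟨v, hv, hnot⟩
    exact hb.2 (mem_reachIn_of_isLink ha he hl (reachIn_subset hu ha) hb.1)

lemma ConnectedOn.exists_isLink (h : G.ConnectedOn W P) (hS : S ⊆ W) (hne : S.Nonempty)
    (hne' : (W \ S).Nonempty) : ∃ e, P e ∧ ∃ a ∈ S, ∃ b ∈ W \ S, G.IsLink e a b :=
  connectedOn_iff_forall_exists_isLink.1 h S hS hne hne'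

lemma ConnectedOn.extend {D : Set V} (hD : G.ConnectedOn D P) (hDW : D ⊆ W)
    (hW : G.ConnectedOn W fun _ => True) (hP : ∀ e ∉ G.within D, P e) : G.ConnectedOn W P := by
  rw [connectedOn_iff_forall_exists_isLink]
  intro S hS hne hne'
  by_cases hcut : (D ∩ S).Nonempty ∧ (D \ S).Nonempty
  · obtain ⟨e, he, a, ha, b, hb, hl⟩ := hD.exists_isLink (S := D ∩ S) Set.inter_subset_left hcut.1
      (by simpa only [Set.sdiff_self_inter] using hcut.2)
    exact ⟨e, he, a, ha.2, b, ⟨hDW hb.1, fun h => hb.2 ⟨hb.1, h⟩⟩, hl⟩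
  · obtain ⟨e, -, a, ha, b, hb, hl⟩ := hW.exists_isLink hS hne hne'
    refine ⟨e, hP e fun he => ?_, a, ha, b, hb, hl⟩
    have hab := hl.mem_within_iff.1 he
    exact hcut ⟨⟨a, hab.1, ha⟩, b, hab.2, hb.2⟩

lemma ConnectedOn.of_unique_attachment {D : Set V} (hW : G.ConnectedOn W fun _ => True)
    (hDW : D ⊆ W) (ha : a ∈ D) (hD : ∀ e, ∀ u ∈ D, ∀ v ∈ W \ D, G.IsLink e u v → u = a) :
    G.ConnectedOn D fun _ => True := by
  refine connectedOn_of_subset_reachIn (r := a) fun u hu => by_contra fun hua => ?_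
  obtain ⟨e, -, x, hx, y, hy, hl⟩ := hW.exists_isLink
    (S := D \ G.reachIn (fun _ => True) D a) (Set.sdiff_subset.trans hDW) ⟨u, hu, hua⟩
    ⟨a, hDW ha, fun h => h.2 mem_reachIn_self⟩
  by_cases hyD : y ∈ D
  · have hy' : y ∈ G.reachIn (fun _ => True) D a := by_contra fun h => hy.2 ⟨hyD, h⟩
    exact hx.2 (mem_reachIn_of_isLink hy' trivial hl.symm hyD hx.1)
  · exact hx.2 (hD e x hx.1 y ⟨hy.1, hyD⟩ hl ▸ mem_reachIn_self)

/-! ### Counting edges -/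

/-- The degree of `v` in the subgraph with edge set `F` (loops counted twice). -/
noncomputable def degreeIn (G : Multigraph V E) (F : Set E) (v : V) : ℕ :=
  {e ∈ F | G.src e = v}.ncard + {e ∈ F | G.tgt e = v}.ncard

lemma degreeIn_univ : G.degreeIn Set.univ v = G.degree v := by
  simp only [degreeIn, degree, Set.mem_univ, true_and]

lemma ncard_le_degreeIn [Finite E] (hAF : A ⊆ F) (hA : ∀ e ∈ A, G.Inc e v) :
    A.ncard ≤ G.degreeIn F v :=
  (Set.ncard_le_ncard (t := {e ∈ F | G.src e = v} ∪ {e ∈ F | G.tgt e = v}) fun e he =>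
    (hA e he).imp (⟨hAF he, ·⟩) (⟨hAF he, ·⟩)).trans (Set.ncard_union_le _ _)

lemma ncard_le_degree [Finite E] (hA : ∀ e ∈ A, G.Inc e v) : A.ncard ≤ G.degree v :=
  degreeIn_univ (G := G) ▸ ncard_le_degreeIn A.subset_univ hA

lemma sum_ncard_fiber [Finite E] (F : Set E) (T : Finset V) (g : E → V) :
    ∑ v ∈ T, {e ∈ F | g e = v}.ncard = {e ∈ F | g e ∈ T}.ncard := by
  have := Fintype.ofFinite E
  rw [Set.ncard_eq_toFinset_card', Finset.card_eq_sum_card_fiberwise (f := g) (t := T)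
    fun e he => (Set.mem_toFinset.1 he).2]
  refine Finset.sum_congr rfl fun v hv => ?_
  rw [← Set.ncard_coe_finset]
  congr 1
  ext e
  simp only [Set.mem_ofPred_eq, Finset.coe_filter, Set.mem_toFinset]
  grind

lemma sum_degreeIn [Finite E] (G : Multigraph V E) (F : Set E) (T : Finset V) :
    ∑ v ∈ T, G.degreeIn F v = {e ∈ F | G.src e ∈ T}.ncard + {e ∈ F | G.tgt e ∈ T}.ncard := by
  simp only [degreeIn, Finset.sum_add_distrib, sum_ncard_fiber]

lemma finite_verts [Finite E] (G : Multigraph V E) (A : Set E) : (G.verts A).Finite := by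
  refine ((Set.finite_range G.src).union (Set.finite_range G.tgt)).subset ?_
  rintro v ⟨e, -, h⟩
  exact h.imp (⟨e, ·⟩) (⟨e, ·⟩)

/-- A nonempty edge set with at most as many vertices as edges. The minimal such sets are the
cycles, so every such set contains one. -/
def IsDense (G : Multigraph V E) (F : Set E) : Prop :=
  F.Nonempty ∧ (G.verts F).ncard ≤ F.ncard

lemma ncard_lt_ncard_verts_of_minimal_isDense (hF : Minimal G.IsDense F) (hAF : A ⊂ F)
    (hA : A.Nonempty) : A.ncard < (G.verts A).ncard := by
  by_contra! h
  exact hF.not_prop_of_lt hAF ⟨hA, h⟩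

lemma ncard_eq_ncard_verts_of_minimal_isDense [Finite E] (hF : Minimal G.IsDense F) :
    F.ncard = (G.verts F).ncard := by
  obtain ⟨⟨e, he⟩, hle⟩ := hF.prop
  refine hle.antisymm' ?_
  have hcard := Set.ncard_sdiff_singleton_add_one he
  obtain hempty | hne := (F \ {e}).eq_empty_or_nonempty
  · have : 0 < (G.verts F).ncard :=
      (Set.ncard_pos (G.finite_verts F)).2 ⟨_, (G.isLink_src_tgt e).left_mem_verts he⟩
    rw [hempty, Set.ncard_empty] at hcard
    omega
  · have h1 := ncard_lt_ncard_verts_of_minimal_isDense hF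
      (Set.sdiff_singleton_ssubset.2 he) hne
    have h2 := Set.ncard_le_ncard (verts_mono (G := G) (Set.sdiff_subset (s := F) (t := {e})))
      (G.finite_verts F)
    omega

lemma two_le_degreeIn_of_minimal_isDense [Finite E] (hF : Minimal G.IsDense F)
    (hv : v ∈ G.verts F) : 2 ≤ G.degreeIn F v := by
  obtain ⟨e, he, hev⟩ := hv
  have hcard := Set.ncard_sdiff_singleton_add_one he
  have heq := ncard_eq_ncard_verts_of_minimal_isDense hF
  obtain hempty | hne := (F \ {e}).eq_empty_or_nonempty
  · rw [hempty, Set.ncard_empty] at hcard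
    have hloop : G.src e = G.tgt e := (Set.ncard_le_one (G.finite_verts F)).1 (by omega)
      _ ⟨e, he, .inl rfl⟩ _ ⟨e, he, .inr rfl⟩
    have hsrc : G.src e = v := hev.elim id hloop.trans
    have hpos (g : E → V) (hg : g e = v) : 1 ≤ {e ∈ F | g e = v}.ncard :=
      (Set.ncard_pos (Set.toFinite _)).2 ⟨e, he, hg⟩
    exact add_le_add (hpos _ hsrc) (hpos _ (hloop ▸ hsrc))
  · have hv' : v ∈ G.verts (F \ {e}) := by
      by_contra hv'
      have h1 := ncard_lt_ncard_verts_of_minimal_isDense hF (Set.sdiff_singleton_ssubset.2 he) hne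
      have h2 : (G.verts (F \ {e})).ncard < (G.verts F).ncard :=
        Set.ncard_lt_ncard ⟨verts_mono Set.sdiff_subset, fun h => hv' (h ⟨e, he, hev⟩)⟩
          (G.finite_verts F)
      omega
    obtain ⟨e', he', hev'⟩ := hv'
    rw [← Set.ncard_pair (Ne.symm he'.2)]
    refine ncard_le_degreeIn (Set.insert_subset he (Set.singleton_subset_iff.2 he'.1)) ?_
    rintro _ (rfl | rfl)
    exacts [hev, hev']

lemma degreeIn_eq_two_of_minimal_isDense [Finite E] (hF : Minimal G.IsDense F)
    (hv : v ∈ G.verts F) : G.degreeIn F v = 2 := by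
  set T := (G.finite_verts F).toFinset
  have hsum : ∑ _v ∈ T, 2 = ∑ v ∈ T, G.degreeIn F v := by
    have hend (g : E → V) (hg : ∀ e, G.Inc e (g e)) : {e ∈ F | g e ∈ T} = F :=
      Set.sep_eq_self_iff_mem_true.2 fun e he =>
        (G.finite_verts F).mem_toFinset.2 ⟨e, he, hg e⟩
    rw [sum_degreeIn, hend _ fun _ => .inl rfl, hend _ fun _ => .inr rfl,
      ncard_eq_ncard_verts_of_minimal_isDense hF, Set.ncard_eq_toFinset_card _ (G.finite_verts F),
      Finset.sum_const, smul_eq_mul, mul_two]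
  refine ((Finset.sum_eq_sum_iff_of_le fun u hu => ?_).1 hsum v ?_).symm
  · exact two_le_degreeIn_of_minimal_isDense hF ((G.finite_verts F).mem_toFinset.1 hu)
  · exact (G.finite_verts F).mem_toFinset.2 hv

lemma reaches_of_minimal_isDense [Finite E] (hF : Minimal G.IsDense F) (hu : u ∈ G.verts F)
    (hv : v ∈ G.verts F) : G.Reaches (· ∈ F) u v := by
  by_contra hnot
  set M : Set V := {x | G.Reaches (· ∈ F) u x}
  set A : Set E := {e ∈ F | G.src e ∈ M}
  have hAF : A ⊆ F := Set.sep_subset _ _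
  have hclosed : ∀ e ∈ F, ∀ x, G.Inc e x → (x ∈ M ↔ G.src e ∈ M) := by
    rintro e he x (rfl | rfl)
    · rfl
    · exact ⟨fun h => Reaches.tail h he (G.isLink_src_tgt e).symm,
        fun h => Reaches.tail h he (G.isLink_src_tgt e)⟩
  obtain ⟨a, ha, hau⟩ := hu
  obtain ⟨b, hb, hbv⟩ := hv
  have haA : a ∈ A := ⟨ha, (hclosed a ha u hau).1 .refl⟩
  have hbA : b ∉ A := fun h => hnot ((hclosed b hb v hbv).2 h.2)
  have hdisj : Disjoint (G.verts A) (G.verts (F \ A)) := by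
    rw [Set.disjoint_left]
    rintro x ⟨e, he, hex⟩ ⟨e', he', hex'⟩
    exact he'.2 ⟨he'.1, (hclosed e' he'.1 x hex').1 ((hclosed e he.1 x hex).2 he.2)⟩
  have h1 := ncard_lt_ncard_verts_of_minimal_isDense hF
    ⟨hAF, fun h => hbA (h hb)⟩ ⟨a, haA⟩
  have h2 := ncard_lt_ncard_verts_of_minimal_isDense hF
    ⟨Set.sdiff_subset, fun h => (h ha).2 haA⟩ ⟨b, hb, hbA⟩
  have h3 : (G.verts A ∪ G.verts (F \ A)).ncard ≤ (G.verts F).ncard := Set.ncard_le_ncard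
    (Set.union_subset (verts_mono hAF) (verts_mono Set.sdiff_subset)) (G.finite_verts F)
  rw [Set.ncard_union_eq hdisj (G.finite_verts _) (G.finite_verts _)] at h3
  have h4 := Set.ncard_sdiff_add_ncard_of_subset hAF
  have h5 := hF.prop.2
  omega

lemma isCycle_of_minimal_isDense [Finite E] (hF : Minimal G.IsDense F) : G.IsCycle F :=
  ⟨hF.prop.1, fun _ hv => degreeIn_eq_two_of_minimal_isDense hF hv,
    fun _ _ hu hv => reaches_of_minimal_isDense hF hu hv⟩

lemma IsDense.exists_isCycle_subset [Finite E] (hF : G.IsDense F) : ∃ C ⊆ F, G.IsCycle C := by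
  obtain ⟨C, hCF, hC⟩ := exists_minimal_le_of_wellFoundedLT G.IsDense F hF
  exact ⟨C, hCF, isCycle_of_minimal_isDense hC⟩

lemma ncard_within_lt_of_not_hasCycleIn [Finite V] [Finite E] (hS : S.Nonempty)
    (hac : ¬ G.HasCycleIn S) : (G.within S).ncard < S.ncard := by
  by_contra! hle
  have hpos : 0 < S.ncard := (Set.ncard_pos S.toFinite).2 hS
  have hdense : G.IsDense (G.within S) :=
    ⟨(Set.ncard_pos (Set.toFinite _)).1 (by omega),
      (Set.ncard_le_ncard (verts_subset_iff.2 subset_rfl)).trans hle⟩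
  obtain ⟨C, hCS, hC⟩ := hdense.exists_isCycle_subset
  exact hac ⟨C, hC, hCS⟩

lemma sum_degree [Finite E] (G : Multigraph V E) (T : Finset V) :
    ∑ v ∈ T, G.degree v = 2 * (G.within T).ncard + (G.cutEdges (T : Set V)).ncard := by
  have hunion : {e | G.src e ∈ T} ∪ {e | G.tgt e ∈ T} = G.within T ∪ G.cutEdges (T : Set V) := by
    ext e
    simp only [within, cutEdges, Set.mem_union, Set.mem_ofPred_eq, Finset.mem_coe]
    tauto
  have h1 := Set.ncard_union_add_ncard_inter {e | G.src e ∈ T} {e | G.tgt e ∈ T}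
  have h2 := Set.ncard_union_eq (G.disjoint_within_cutEdges T)
  have h3 := sum_degreeIn G Set.univ T
  simp only [degreeIn_univ, Set.mem_univ, true_and] at h3
  have hinter : {e | G.src e ∈ T} ∩ {e | G.tgt e ∈ T} = G.within T := rfl
  rw [hunion, hinter, h2] at h1
  omega

lemma Cubic.three_mul_ncard [Finite V] [Finite E] (hG : G.Cubic) (S : Set V) :
    3 * S.ncard = 2 * (G.within S).ncard + (G.cutEdges S).ncard := by
  have h := sum_degree G S.toFinite.toFinset
  rwa [Finset.sum_congr rfl fun v _ => hG v, Finset.sum_const, smul_eq_mul, mul_comm,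
    ← Set.ncard_eq_toFinset_card, Set.Finite.coe_toFinset] at h

lemma Cubic.ncard_add_two_le_ncard_cutEdges [Finite V] [Finite E] (hG : G.Cubic)
    (hS : S.Nonempty) (hac : ¬ G.HasCycleIn S) : S.ncard + 2 ≤ (G.cutEdges S).ncard := by
  have h1 := hG.three_mul_ncard S
  have h2 := ncard_within_lt_of_not_hasCycleIn hS hac
  omega

lemma CyclicallyEdgeConnected.le_ncard_cutEdges [Finite V] [Finite E] {k : ℕ}
    (hk : G.CyclicallyEdgeConnected k) (hG : G.Cubic) (hS : S.Nonempty) (hS' : Sᶜ.Nonempty) :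
    min k (min S.ncard Sᶜ.ncard + 2) ≤ (G.cutEdges S).ncard := by
  by_cases hc : G.HasCycleIn S
  · by_cases hc' : G.HasCycleIn Sᶜ
    · exact (min_le_left _ _).trans (hk S hc hc')
    · have := hG.ncard_add_two_le_ncard_cutEdges hS' hc'
      rw [cutEdges_compl] at this
      omega
  · have := hG.ncard_add_two_le_ncard_cutEdges hS hc
    omega

lemma edgeConnected_of_forall_le_ncard_cutEdges [Nonempty V] [Finite E] {k : ℕ}
    (h : ∀ S : Set V, S.Nonempty → Sᶜ.Nonempty → k ≤ (G.cutEdges S).ncard) :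
    G.EdgeConnected k := by
  refine fun A hA => ⟨‹_›, fun u v => by_contra fun hv => hA.not_ge ?_⟩
  refine (h {x | G.Reaches (· ∉ A) u x} ⟨u, .refl⟩ ⟨v, hv⟩).trans (Set.ncard_le_ncard ?_)
  intro e he
  obtain ⟨a, ha, b, hb, hl⟩ := mem_cutEdges_iff.1 he
  exact by_contra fun heA => hb (Reaches.tail ha heA hl)

lemma CyclicallyEdgeConnected.edgeConnected [Nonempty V] [Finite V] [Finite E] {k : ℕ}
    (hk : G.CyclicallyEdgeConnected k) (hG : G.Cubic) : G.EdgeConnected (min k 3) := by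
  refine edgeConnected_of_forall_le_ncard_cutEdges fun S hS hS' => ?_
  have h1 := hk.le_ncard_cutEdges hG hS hS'
  have h2 : 0 < S.ncard := (Set.ncard_pos S.toFinite).2 hS
  have h3 : 0 < Sᶜ.ncard := (Set.ncard_pos Sᶜ.toFinite).2 hS'
  omega

/-! ### Two-edge-connected parts -/

lemma EdgeConnectedOn.connectedOn {k : ℕ} (h : G.EdgeConnectedOn W (k + 1)) :
    G.ConnectedOn W fun _ => True :=
  (h ∅ (by simp)).mono fun _ _ => trivial

lemma EdgeConnectedOn.two_le_ncard_joins (h : G.EdgeConnectedOn W 2) (hv : v ∈ W)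
    (hS : S ⊆ W \ {v}) (hne : S.Nonempty)
    (hSv : ∀ e, ∀ a ∈ S, ∀ b ∈ (W \ {v}) \ S, ¬ G.IsLink e a b) :
    2 ≤ {e | G.joins e v S}.ncard := by
  by_contra! hlt
  obtain ⟨e, he, a, ha, b, hb, hl⟩ := (h _ hlt).exists_isLink (hS.trans Set.sdiff_subset) hne
    ⟨v, hv, fun hvS => (hS hvS).2 rfl⟩
  obtain rfl | hbv := eq_or_ne b v
  · exact he (joins_iff.2 ⟨a, ha, hl.symm⟩)
  · exact hSv e a ha b ⟨⟨hb.1, hbv⟩, hb.2⟩ hl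

lemma ncard_joins_add_ncard_joins_le_degree [Finite E] (h : Disjoint S X) :
    {e | G.joins e v S}.ncard + {e | G.joins e v X}.ncard ≤ G.degree v := by
  have hdisj : Disjoint {e | G.joins e v S} {e | G.joins e v X} := by
    rw [Set.disjoint_left]
    intro e he he'
    obtain ⟨a, ha, hl⟩ := joins_iff.1 he
    obtain ⟨b, hb, hl'⟩ := joins_iff.1 he'
    exact Set.disjoint_left.1 h ha (hl.right_unique hl' ▸ hb)
  rw [← Set.ncard_union_eq hdisj]
  exact ncard_le_degree fun e he => he.elim joins.inc joins.inc

lemma EdgeConnectedOn.connectedOn_sdiff_singleton [Finite E] (h : G.EdgeConnectedOn W 2)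
    (hv : v ∈ W) (hdeg : G.degree v ≤ 3) : G.ConnectedOn (W \ {v}) fun _ => True := by
  rw [connectedOn_iff_forall_exists_isLink]
  intro S hS hne hne'
  by_contra! hnot
  have h1 := h.two_le_ncard_joins hv hS hne fun e a ha b hb hl => hnot e trivial a ha b hb hl
  have h2 := h.two_le_ncard_joins hv Set.sdiff_subset hne' fun e a ha b hb hl =>
    hnot e trivial b (by_contra fun hbS => hb.2 ⟨hb.1, hbS⟩) a ha hl.symm
  have h3 := ncard_joins_add_ncard_joins_le_degree (G := G) (v := v)
    (Set.disjoint_sdiff_right (s := S) (t := W \ {v}))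
  omega

/-! ### Rerouting -/

/-- The edge set obtained from `F` by handing over the whole of `D`: of the edges leaving `D` only
those in `J` are kept, while all edges inside `D` are added. If `F` connects two vertices and `D`
is connected, then at most two edges in `J` suffice to keep them connected. -/
def reroute (G : Multigraph V E) (F : Set E) (D : Set V) (J : Set E) : Set E :=
  F \ G.cutEdges D ∪ J ∪ G.within D

variable {D T : Set V} {J K : Set E} {t : V}

lemma reroute_mono (h : J ⊆ K) : G.reroute F D J ⊆ G.reroute F D K :=
  Set.union_subset_union_left _ (Set.union_subset_union_right _ h)

lemma IsLink.notMem_reroute (hl : G.IsLink e a b) (ha : a ∈ D) (hb : b ∉ D) (he : e ∉ J) :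
    e ∉ G.reroute F D J := by
  rintro ((h | h) | h)
  exacts [h.2 (hl.mem_cutEdges_iff.2 (.inl ⟨ha, hb⟩)), he h, hb (hl.mem_within_iff.1 h).2]

lemma Reaches.exists_entry (h : G.Reaches (· ∈ F) t w) (ht : t ∉ D) (hw : w ∈ D) :
    ∃ g ∈ F, ∃ a, ∃ b ∈ D, G.IsLink g a b ∧ G.Reaches (· ∈ F \ G.cutEdges D) t a := by
  obtain ⟨g, a, b, hg, ⟨haD, ha⟩, hb, hl⟩ := h.exists_exit
    (S := {x | x ∉ D ∧ G.Reaches (· ∈ F \ G.cutEdges D) t x}) ⟨ht, .refl⟩ fun h => h.1 hw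
  refine ⟨g, hg, a, b, by_contra fun hbD => hb ⟨hbD, ha.tail ⟨hg, fun hcut => ?_⟩ hl⟩, hl, ha⟩
  exact (hl.mem_cutEdges_iff.1 hcut).elim (fun h => haD h.1) fun h => hbD h.2

lemma Reaches.exists_reroute_singleton (h : G.Reaches (· ∈ F) t w) (ht : t ∉ D) (hw : w ∈ D)
    (hD : G.ConnectedOn D fun _ => True) :
    ∃ g ∈ F, ∀ d ∈ D, G.Reaches (· ∈ G.reroute F D {g}) t d := by
  obtain ⟨g, hg, a, b, hb, hl, ha⟩ := h.exists_entry ht hw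
  refine ⟨g, hg, fun d hd => ?_⟩
  have hta : G.Reaches (· ∈ G.reroute F D {g}) t a := ha.mono fun e he => .inl (.inl he)
  have hbd : G.Reaches (· ∈ G.reroute F D {g}) b d := (hD b hb d hd).mono fun e he => .inr he.2
  exact (hta.tail (.inl (.inr rfl)) hl).trans hbd

lemma Reaches.reroute_empty (h : G.Reaches (· ∈ F) t w)
    (hD : ∀ d ∈ D, ¬ G.Reaches (· ∈ F) t d) : G.Reaches (· ∈ G.reroute F D ∅) t w := by
  refine (h.mem_of_closed (S := {x | G.Reaches (· ∈ F) t x ∧ G.Reaches (· ∈ G.reroute F D ∅) t x})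
    ⟨.refl, .refl⟩ ?_).2
  rintro e a b he hl ⟨ha, ha'⟩
  refine ⟨ha.tail he hl, ha'.tail (.inl (.inl ⟨he, fun hcut => ?_⟩)) hl⟩
  exact (hl.mem_cutEdges_iff.1 hcut).elim (fun h => hD a h.1 ha)
    fun h => hD b h.2 (ha.tail he hl)

lemma Reaches.exists_reroute (h : G.Reaches (· ∈ F) t w) (ht : t ∉ D) (hw : w ∉ D)
    (hD : G.ConnectedOn D fun _ => True) :
    ∃ J ⊆ F, J.ncard ≤ 2 ∧ G.Reaches (· ∈ G.reroute F D J) t w := by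
  by_cases hd : ∃ d ∈ D, G.Reaches (· ∈ F) t d
  · obtain ⟨d, hdD, hd⟩ := hd
    obtain ⟨g₁, hg₁, h₁⟩ := hd.exists_reroute_singleton ht hdD hD
    obtain ⟨g₂, hg₂, h₂⟩ := (h.symm.trans hd).exists_reroute_singleton hw hdD hD
    refine ⟨{g₁, g₂}, Set.pair_subset hg₁ hg₂, (Set.ncard_insert_le _ _).trans (by simp), ?_⟩
    have h₁' := (h₁ d hdD).mono (reroute_mono (K := {g₁, g₂}) (by simp))
    have h₂' := (h₂ d hdD).mono (reroute_mono (K := {g₁, g₂}) (by simp))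
    exact h₁'.trans h₂'.symm
  · push Not at hd
    exact ⟨∅, Set.empty_subset _, by simp, h.reroute_empty hd⟩

lemma EdgeConnectedOn.exists_reroute (h3 : G.EdgeConnected 3) (h2 : G.EdgeConnectedOn W 2)
    (hDW : D ⊆ W) (hne : D.Nonempty) (hD : G.ConnectedOn D fun _ => True) (ht : t ∈ W \ D)
    (hDT : D ∩ G.boundary W ⊆ T) (h : G.Reaches (· ∈ F) t w) (hw : w ∈ T) :
    ∃ J ⊆ F, (∃ w ∈ T, G.Reaches (· ∈ G.reroute F D J) t w) ∧
      ∃ e ∉ J, ∃ a ∈ D, ∃ b ∈ W \ D, G.IsLink e a b := by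
  obtain hdisj | ⟨d, hdD, hdT⟩ := (D ∩ T).eq_empty_or_nonempty
  · have hwD : w ∉ D := fun h => (hdisj ▸ Set.mem_inter h hw : w ∈ (∅ : Set V))
    obtain ⟨J, hJF, hJ, hreach⟩ := h.exists_reroute ht.2 hwD hD
    obtain ⟨d, hd⟩ := hne
    obtain ⟨e, a, b, he, ha, hb, hl⟩ := ((h3 J (by omega)).2 d t).exists_exit hd ht.2
    refine ⟨J, hJF, ⟨w, hw, hreach⟩, e, he, a, ha, b, ⟨by_contra fun hbW => ?_, hb⟩, hl⟩
    exact (hdisj ▸ ⟨ha, hDT ⟨ha, hl.mem_boundary (hDW ha) hbW⟩⟩ : a ∈ (∅ : Set V))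
  · have hexit (J : Set E) (hJ : J.ncard < 2) := (h2 J hJ).exists_isLink hDW hne ⟨t, ht⟩
    by_cases hu : ∃ u ∈ D, G.Reaches (· ∈ F) t u
    · obtain ⟨u, huD, hu⟩ := hu
      obtain ⟨g, hg, hreach⟩ := hu.exists_reroute_singleton ht.2 huD hD
      exact ⟨{g}, Set.singleton_subset_iff.2 hg, ⟨d, hdT, hreach d hdD⟩, hexit {g} (by simp)⟩
    · push Not at hu
      exact ⟨∅, Set.empty_subset _, ⟨w, hw, h.reroute_empty hu⟩, hexit ∅ (by simp)⟩

lemma EdgeConnectedOn.exists_reachIn_ssubset (h3 : G.EdgeConnected 3) (h2 : G.EdgeConnectedOn W 2)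
    (ht : t ∈ W) (hFW : F ⊆ G.within W) (h : G.Reaches (· ∈ F) t w) (hw : w ∈ T)
    (hT : G.boundary W ⊆ T ∪ G.reachIn (· ∉ F) W t) (hne : ¬ G.ConnectedOn W (· ∉ F)) :
    ∃ F' ⊆ G.within W, F' ∩ G.within (G.reachIn (· ∉ F) W t) ⊆ F ∧
      (∃ w ∈ T, G.Reaches (· ∈ F') t w) ∧
      G.reachIn (· ∉ F) W t ⊂ G.reachIn (· ∉ F') W t := by
  set K := G.reachIn (· ∉ F) W t
  have hKW : K ⊆ W := reachIn_subset ht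
  obtain ⟨u, huW, huK⟩ := Set.not_subset.1 (mt connectedOn_of_subset_reachIn hne)
  set D := G.reachIn (fun _ => True) (W \ K) u
  have hDK : D ⊆ W \ K := reachIn_subset ⟨huW, huK⟩
  have hDW : D ⊆ W := hDK.trans Set.sdiff_subset
  obtain ⟨J, hJF, hreach, e, he, a, ha, b, hb, hl⟩ := h2.exists_reroute h3 hDW
    ⟨u, mem_reachIn_self⟩ (connectedOn_reachIn G _ _ _) ⟨ht, fun h => (hDK h).2 mem_reachIn_self⟩
    (fun v hv => (hT hv.2).resolve_right (hDK hv.1).2) h hw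
  have hbK : b ∈ K := by_contra fun hbK =>
    hb.2 (mem_reachIn_of_isLink ha trivial hl (hDK ha) ⟨hb.1, hbK⟩)
  have hF'K : G.reroute F D J ∩ G.within K ⊆ F := by
    rintro g ⟨(hg | hg) | hg, hgK⟩
    exacts [hg.1, hJF hg, absurd hgK.1 (hDK hg.1).2]
  refine ⟨G.reroute F D J, ?_, hF'K, hreach, ?_⟩
  · exact Set.union_subset (Set.union_subset (Set.sdiff_subset.trans hFW) (hJF.trans hFW))
      (within_mono hDW)
  · exact reachIn_ssubset_reachIn (fun g hgK hgF hg => hgF (hF'K ⟨hg, hgK⟩)) hKW hbK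
      ⟨hDW ha, (hDK ha).2⟩ hl.symm (hl.notMem_reroute ha hb.2 he)

/-! ### Peripheral paths -/

/-- The simple graph underlying the spanning subgraph with edge set `F`; its walks are used to
construct paths of `G`. -/
def simpleGraphOn (G : Multigraph V E) (F : Set E) : SimpleGraph V :=
  SimpleGraph.fromRel (G.adjVia (· ∈ F))

lemma exists_isLink_of_adj (h : (G.simpleGraphOn F).Adj a b) : ∃ e ∈ F, G.IsLink e a b := by
  obtain ⟨-, ⟨e, he, hl⟩ | ⟨e, he, hl⟩⟩ := (SimpleGraph.fromRel_adj _ _ _).1 h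
  exacts [⟨e, he, hl⟩, ⟨e, he, hl.symm⟩]

lemma Reaches.reachable (h : G.Reaches (· ∈ F) u v) : (G.simpleGraphOn F).Reachable u v := by
  induction h with
  | refl => rfl
  | @tail a b _ hab ih =>
    obtain rfl | hne := eq_or_ne a b
    · exact ih
    · exact ih.trans ((SimpleGraph.fromRel_adj _ _ _).2 ⟨hne, .inl hab⟩).reachable

lemma isPath_of_injective {n : ℕ} {vs : Fin (n + 1) → V} {es : Fin n → E}
    (hvs : Function.Injective vs) (hes : ∀ i, G.IsLink (es i) (vs i.castSucc) (vs i.succ)) :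
    G.IsPath vs es := by
  refine ⟨hvs, fun i j hij => ?_, hes⟩
  rcases (hes i).eq_and_eq_or_eq_and_eq (hij ▸ hes j) with ⟨h, -⟩ | ⟨h, h'⟩
  · exact Fin.castSucc_injective n (hvs h)
  · have h₁ := congrArg Fin.val (hvs h)
    have h₂ := congrArg Fin.val (hvs h')
    simp only [Fin.val_castSucc, Fin.val_succ] at h₁ h₂
    omega

lemma exists_isPath_of_walk {n : ℕ} {p : (G.simpleGraphOn F).Walk t w} (hp : p.IsPath)
    (hn : p.length = n) :
    ∃ es : Fin n → E, G.IsPath (fun i : Fin (n + 1) => p.getVert i) es ∧ ∀ i, es i ∈ F := by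
  have hadj (i : Fin n) : ∃ e ∈ F, G.IsLink e (p.getVert i) (p.getVert (i + 1)) :=
    exists_isLink_of_adj (p.adj_getVert_succ (by omega))
  choose es hesF hes using hadj
  refine ⟨es, isPath_of_injective (fun i j hij => ?_) hes, hesF⟩
  have hle (i : Fin (n + 1)) : (i : ℕ) ∈ {k | k ≤ p.length} := hn ▸ Fin.is_le i
  exact Fin.ext (hp.getVert_injOn (hle i) (hle j) hij)

lemma Reaches.exists_isPath (h : G.Reaches (· ∈ F) t w) (hw : w ∈ T) (ht : t ∉ T) :
    ∃ (n : ℕ) (vs : Fin (n + 1 + 1) → V) (es : Fin (n + 1) → E), G.IsPath vs es ∧ vs 0 = t ∧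
      vs (Fin.last (n + 1)) ∈ T ∧ (∀ i, es i ∈ F) ∧ ∀ i, i ≠ Fin.last (n + 1) → vs i ∉ T := by
  set H := G.simpleGraphOn F
  obtain ⟨u, ⟨hu, hr⟩, hmin⟩ := exists_minimalFor_of_wellFoundedLT
    (fun u => u ∈ T ∧ H.Reachable t u) (H.dist t) ⟨w, hw, h.reachable⟩
  obtain ⟨p, hp, hdist⟩ := hr.exists_path_of_dist
  have hne : t ≠ u := fun h => ht (h ▸ hu)
  obtain ⟨n, hn⟩ := Nat.exists_eq_succ_of_ne_zero (hdist ▸ (hr.pos_dist_of_ne hne).ne')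
  obtain ⟨es, hpath, hes⟩ := exists_isPath_of_walk hp hn
  refine ⟨n, _, es, hpath, p.getVert_zero, ?_, hes, fun i hi hiT => ?_⟩
  · rwa [Fin.val_last, ← Nat.succ_eq_add_one, ← hn, p.getVert_length]
  · have hlt : H.dist t (p.getVert i) < H.dist t u := calc
      H.dist t (p.getVert i) ≤ (p.take i).length := SimpleGraph.dist_le _
      _ ≤ i := by simp
      _ < H.dist t u := by
        have := Fin.val_lt_last hi
        omega
    exact hlt.not_ge (hmin ⟨hiT, (p.take i).reachable⟩ hlt.le)

lemma IsPath.verts_range {n : ℕ} {vs : Fin (n + 1 + 1) → V} {es : Fin (n + 1) → E}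
    (h : G.IsPath vs es) : G.verts (Set.range es) = Set.range vs := by
  ext v
  constructor
  · rintro ⟨_, ⟨i, rfl⟩, hv⟩
    obtain ⟨w, hl⟩ := hv.exists_isLink
    rcases hl.eq_and_eq_or_eq_and_eq (h.2.2 i) with ⟨rfl, -⟩ | ⟨rfl, -⟩
    exacts [⟨_, rfl⟩, ⟨_, rfl⟩]
  · rintro ⟨i, rfl⟩
    induction i using Fin.cases with
    | zero => exact ⟨_, ⟨0, rfl⟩, IsLink.inc_left (h.2.2 0)⟩
    | succ i => exact ⟨_, ⟨i, rfl⟩, IsLink.inc_right (h.2.2 i)⟩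

lemma IsPath.two_le_ncard_inc {n : ℕ} {vs : Fin (n + 1) → V} {es : Fin n → E}
    (h : G.IsPath vs es) {i : Fin (n + 1)} (h0 : i ≠ 0) (hl : i ≠ Fin.last n) :
    2 ≤ {e ∈ Set.range es | G.Inc e (vs i)}.ncard := by
  obtain ⟨-, hes, hlink⟩ := h
  obtain ⟨j, hj⟩ := Fin.exists_succ_eq.2 h0
  obtain ⟨k, rfl⟩ := Fin.exists_castSucc_eq.2 hl
  have hjk : j ≠ k := fun h => by simp [h, Fin.ext_iff] at hj
  rw [← Set.ncard_pair (hes.ne hjk)]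
  refine Set.ncard_le_ncard (Set.pair_subset ⟨⟨j, rfl⟩, ?_⟩ ⟨⟨k, rfl⟩, ?_⟩)
    ((Set.finite_range es).subset (Set.sep_subset _ _))
  exacts [hj ▸ IsLink.inc_right (hlink j), IsLink.inc_left (hlink k)]

lemma IsPath.notMem_verts [Finite E] {n : ℕ} {vs : Fin (n + 1) → V} {es : Fin n → E}
    (h : G.IsPath vs es) (hes : Set.range es ⊆ G.within W) (hA : A ⊆ G.within W)
    (hdisj : Disjoint (Set.range es) A) {i : Fin (n + 1)} (h0 : i ≠ 0) (hl : i ≠ Fin.last n)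
    (hdeg : G.degree (vs i) ≤ 3) (hi : vs i ∈ G.boundary W) : vs i ∉ G.verts A := by
  rintro ⟨e, he, hei⟩
  obtain ⟨-, g, hg⟩ := hi
  have hgW : g ∉ G.within W := fun hgW => by
    obtain ⟨b, hb, hl⟩ := joins_iff.1 hg
    exact hb (hl.mem_within_iff.1 hgW).2
  have heg : e ≠ g := fun h => hgW (h ▸ hA he)
  have hdisj' : Disjoint {e ∈ Set.range es | G.Inc e (vs i)} {e, g} := by
    rw [Set.disjoint_right]
    rintro _ (rfl | rfl) hmem
    exacts [Set.disjoint_left.1 hdisj hmem.1 he, hgW (hes hmem.1)]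
  have hinc : ∀ e' ∈ {e ∈ Set.range es | G.Inc e (vs i)} ∪ {e, g}, G.Inc e' (vs i) := by
    rintro e' (he' | rfl | rfl)
    exacts [he'.2, hei, hg.inc]
  have h4 := ncard_le_degree hinc
  rw [Set.ncard_union_eq hdisj', Set.ncard_pair heg] at h4
  have h2 := h.two_le_ncard_inc h0 hl
  omega

/-- `A` is the edge set of a connected subgraph with at least one edge, and `t` is one of its
vertices. -/
def IsRootedAt (G : Multigraph V E) (A : Set E) (t : V) : Prop :=
  t ∈ G.verts A ∧ ∀ v ∈ G.verts A, G.Reaches (· ∈ A) t v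

namespace IsRootedAt

lemma of_forall_reaches {s : V} (h : ∀ u ∈ S, G.Reaches (· ∈ A) t u) (hA : G.verts A ⊆ S)
    (hs : s ∈ S) (hst : s ≠ t) : G.IsRootedAt A t :=
  ⟨(h s hs).symm.exists_inc hst, fun v hv => h v (hA hv)⟩

lemma union (hA : G.IsRootedAt A t) (hB : G.IsRootedAt B t) : G.IsRootedAt (A ∪ B) t := by
  refine ⟨verts_mono Set.subset_union_left hA.1, ?_⟩
  rintro v ⟨e, he | he, hv⟩
  · exact (hA.2 v ⟨e, he, hv⟩).mono fun _ => .inl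
  · exact (hB.2 v ⟨e, he, hv⟩).mono fun _ => .inr

lemma verts_subset_reachIn (h : G.IsRootedAt A t) (hA : A ⊆ G.within W) (hF : Disjoint F A) :
    G.verts A ⊆ G.reachIn (· ∉ F) W t := fun v hv =>
  (h.2 v hv).mono fun _ he => ⟨Set.disjoint_right.1 hF he, hA he⟩

end IsRootedAt

lemma IsPath.isRootedAt {n : ℕ} {vs : Fin (n + 1 + 1) → V} {es : Fin (n + 1) → E}
    (h : G.IsPath vs es) : G.IsRootedAt (Set.range es) (vs 0) := by
  unfold IsRootedAt
  rw [h.verts_range]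
  refine ⟨⟨0, rfl⟩, ?_⟩
  rintro _ ⟨i, rfl⟩
  induction i using Fin.induction with
  | zero => exact .refl
  | succ i ih => exact Reaches.tail ih ⟨i, rfl⟩ (h.2.2 i)

/-- `R` is the edge set of a path with at least one edge from `y` to `y'` in the subgraph induced
on `W`, which is peripheral in that subgraph and has no inner vertex on the boundary of `W`. -/
def IsPeripheralPath (G : Multigraph V E) (W : Set V) (y y' : V) (R : Set E) : Prop :=
  ∃ (n : ℕ) (vs : Fin (n + 1 + 1) → V) (es : Fin (n + 1) → E), G.IsPath vs es ∧
    vs 0 = y ∧ vs (Fin.last (n + 1)) = y' ∧ Set.range es = R ∧ (∀ i, vs i ∈ W) ∧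
    G.ConnectedOn W (· ∉ R) ∧ ∀ i, i ≠ 0 → i ≠ Fin.last (n + 1) → vs i ∉ G.boundary W

variable {y y' : V} {R : Set E}

namespace IsPeripheralPath

lemma subset_within (h : G.IsPeripheralPath W y y' R) : R ⊆ G.within W := by
  obtain ⟨n, vs, es, hp, -, -, rfl, hW, -⟩ := h
  rw [← verts_subset_iff, hp.verts_range]
  exact Set.range_subset_iff.2 hW

lemma isRootedAt (h : G.IsPeripheralPath W y y' R) : G.IsRootedAt R y := by
  obtain ⟨n, vs, es, hp, rfl, -, rfl, -⟩ := h
  exact hp.isRootedAt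

lemma right_mem_verts (h : G.IsPeripheralPath W y y' R) : y' ∈ G.verts R := by
  obtain ⟨n, vs, es, hp, -, rfl, rfl, -⟩ := h
  exact hp.verts_range ▸ ⟨_, rfl⟩

lemma eq_or_eq_of_mem_boundary (h : G.IsPeripheralPath W y y' R) (hv : v ∈ G.verts R)
    (hvW : v ∈ G.boundary W) : v = y ∨ v = y' := by
  obtain ⟨n, vs, es, hp, rfl, rfl, rfl, -, -, hinner⟩ := h
  obtain ⟨i, rfl⟩ := hp.verts_range ▸ hv
  by_contra! hne
  exact hinner i (fun h => hne.1 (h ▸ rfl)) (fun h => hne.2 (h ▸ rfl)) hvW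

end IsPeripheralPath

lemma EdgeConnectedOn.exists_connectedOn_notMem [Finite V] [Finite E] {w₀ : V} {F₀ : Set E}
    (h3 : G.EdgeConnected 3) (h2 : G.EdgeConnectedOn W 2) (hAW : A ⊆ G.within W)
    (hA : G.IsRootedAt A t) (hF₀W : F₀ ⊆ G.within W) (hF₀A : Disjoint F₀ A)
    (h : G.Reaches (· ∈ F₀) t w₀) (hw₀ : w₀ ∈ T) (hT : G.boundary W ⊆ T ∪ G.verts A) :
    ∃ F ⊆ G.within W, Disjoint F A ∧ (∃ w ∈ T, G.Reaches (· ∈ F) t w) ∧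
      G.ConnectedOn W (· ∉ F) := by
  obtain ⟨F, ⟨hFW, hFA, w, hw, hFw⟩, hmax⟩ := (Set.toFinite {F | F ⊆ G.within W ∧ Disjoint F A ∧
    ∃ w ∈ T, G.Reaches (· ∈ F) t w}).exists_maximalFor (fun F => G.reachIn (· ∉ F) W t) _
    ⟨F₀, hF₀W, hF₀A, w₀, hw₀, h⟩
  refine ⟨F, hFW, hFA, ⟨w, hw, hFw⟩, by_contra fun hne => ?_⟩
  have hAK : G.verts A ⊆ G.reachIn (· ∉ F) W t := hA.verts_subset_reachIn hAW hFA
  obtain ⟨F', hF'W, hF'F, hF'T, hss⟩ :=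
    h2.exists_reachIn_ssubset h3 (verts_subset_iff.2 hAW hA.1) hFW hFw hw
      (hT.trans (Set.union_subset_union_right _ hAK)) hne
  have hF'A : Disjoint F' A := Set.disjoint_left.2 fun e he heA =>
    Set.disjoint_left.1 hFA (hF'F ⟨he, verts_subset_iff.1 hAK heA⟩) heA
  exact hss.2 (hmax ⟨hF'W, hF'A, hF'T⟩ hss.1)

lemma EdgeConnectedOn.exists_isPeripheralPath [Finite V] [Finite E] {w₀ : V} {F₀ : Set E}
    (hdeg : ∀ v ∈ W, G.degree v ≤ 3) (h3 : G.EdgeConnected 3) (h2 : G.EdgeConnectedOn W 2)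
    (hAW : A ⊆ G.within W) (hA : G.IsRootedAt A t) (hF₀W : F₀ ⊆ G.within W)
    (hF₀A : Disjoint F₀ A) (h : G.Reaches (· ∈ F₀) t w₀)
    (hw₀ : w₀ ∈ G.boundary W \ G.verts A) :
    ∃ w ∈ G.boundary W \ G.verts A, ∃ R, G.IsPeripheralPath W t w R ∧ Disjoint R A := by
  obtain ⟨F, hFW, hFA, ⟨w, hw, hFw⟩, hF⟩ := h2.exists_connectedOn_notMem h3 hAW hA hF₀W hF₀A h
    hw₀ (Set.subset_sdiff_union _ _)
  obtain ⟨n, vs, es, hp, rfl, hlast, hes, hvs⟩ := hFw.exists_isPath hw fun h => h.2 hA.1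
  have hRF : Set.range es ⊆ F := Set.range_subset_iff.2 hes
  have hRA : Disjoint (Set.range es) A := hFA.mono_left hRF
  have hvsW : ∀ i, vs i ∈ W := by
    rw [← Set.range_subset_iff, ← hp.verts_range, verts_subset_iff]
    exact hRF.trans hFW
  refine ⟨_, hlast, _, ⟨n, vs, es, hp, rfl, rfl, rfl, hvsW, ?_, ?_⟩, hRA⟩
  · exact hF.mono fun e he h => he (hRF h)
  · intro i hi0 hil hi
    exact hvs i hil
      ⟨hi, hp.notMem_verts (hRF.trans hFW) hAW hRA hi0 hil (hdeg _ (hvsW i)) hi⟩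

/-! ### Two peripheral paths in a two-edge-connected part -/

variable {z : V} {Y : Set V}

lemma ConnectedOn.exists_reachIn_ssubset (hC : G.ConnectedOn (W \ D) fun _ => True)
    (hv : v ∈ W \ D) (hr : r ∈ W \ D) (hrv : r ≠ v)
    (hWv : G.ConnectedOn (W \ {v}) fun _ => True)
    (hne : ¬ G.ConnectedOn (W \ insert v D) fun _ => True) :
    ∃ u ∈ W \ D, u ≠ r ∧ (∃ e, ∃ a ∈ D, G.IsLink e a u) ∧
      G.reachIn (fun _ => True) (W \ insert v D) r ⊂
        G.reachIn (fun _ => True) (W \ insert u D) r := by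
  set M := G.reachIn (fun _ => True) (W \ insert v D) r
  have hMW : M ⊆ W \ insert v D := reachIn_subset ⟨hr.1, by rintro (h | h); exacts [hrv h, hr.2 h]⟩
  have hrM : r ∈ M := mem_reachIn_self
  have hMclosed {e c d} (hl : G.IsLink e c d) (hc : c ∈ M) (hd : d ∈ W \ insert v D) : d ∈ M :=
    mem_reachIn_of_isLink hc trivial hl (hMW hc) hd
  obtain ⟨e, -, u, hu, b, hb, hl⟩ := hWv.exists_isLink (S := (W \ insert v D) \ M)
    (fun x hx => ⟨hx.1.1, fun h => hx.1.2 (.inl h)⟩)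
    (Set.sdiff_nonempty.2 (mt connectedOn_of_subset_reachIn hne)) ⟨r, ⟨hr.1, hrv⟩, fun h => h.2 hrM⟩
  have hbM : b ∉ M := fun hbM => hu.2 (hMclosed hl.symm hbM hu.1)
  have hbD : b ∈ D := by_contra fun hbD =>
    hb.2 ⟨⟨hb.1.1, by rintro (h | h); exacts [hb.1.2 h, hbD h]⟩, hbM⟩
  refine ⟨u, ⟨hu.1.1, fun h => hu.1.2 (.inr h)⟩, fun h => hu.2 (h ▸ hrM), ⟨e, b, hbD, hl.symm⟩, ?_⟩
  obtain ⟨g, -, c, hc, d, hd, hg⟩ := hC.exists_isLink (S := M)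
    (fun x hx => ⟨(hMW hx).1, fun h => (hMW hx).2 (.inr h)⟩) ⟨r, hrM⟩
    ⟨v, hv, fun h => (hMW h).2 (.inl rfl)⟩
  obtain rfl : d = v := by_contra fun hdv =>
    hd.2 (hMclosed hg hc ⟨hd.1.1, by rintro (h | h); exacts [hdv h, hd.1.2 h]⟩)
  refine reachIn_ssubset_reachIn (fun _ _ => id) (fun x hx => ⟨(hMW hx).1, ?_⟩) hc
    ⟨⟨hv.1, ?_⟩, hd.2⟩ hg trivial
  · rintro (rfl | h)
    exacts [hu.2 hx, (hMW hx).2 (.inr h)]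
  · rintro (rfl | h)
    exacts [hu.1.2 (.inl rfl), hv.2 h]

lemma ConnectedOn.insert_of_isLink (hD : G.ConnectedOn D fun _ => True) (ha : a ∈ D)
    (hl : G.IsLink e a v) : G.ConnectedOn (insert v D) fun _ => True := by
  refine connectedOn_of_subset_reachIn (r := a) ?_
  rintro u (rfl | hu)
  · exact mem_reachIn_of_isLink mem_reachIn_self trivial hl (.inr ha) (.inl rfl)
  · exact (hD a ha u hu).mono fun e he => ⟨trivial, .inr he.2.1, .inr he.2.2⟩

lemma EdgeConnectedOn.exists_connectedOn_insert [Finite V] [Finite E]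
    (hdeg : ∀ v ∈ W, G.degree v ≤ 3) (h : G.EdgeConnectedOn W 2) (hDW : D ⊆ W) (hne : D.Nonempty)
    (hD : G.ConnectedOn D fun _ => True) (hC : G.ConnectedOn (W \ D) fun _ => True)
    (hr : r ∈ W \ D) (hCr : ((W \ D) \ {r}).Nonempty) :
    ∃ v ∈ W \ D, v ≠ r ∧ G.ConnectedOn (insert v D) (fun _ => True) ∧
      G.ConnectedOn (W \ insert v D) fun _ => True := by
  have hcut : ∀ v ∈ W, G.ConnectedOn (W \ {v}) fun _ => True := fun v hv =>
    h.connectedOn_sdiff_singleton hv (hdeg v hv)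
  have hcand : {v | v ∈ W \ D ∧ v ≠ r ∧ ∃ e, ∃ a ∈ D, G.IsLink e a v}.Nonempty := by
    obtain ⟨s, hs, hsr⟩ := hCr
    obtain ⟨e, -, a, ha, b, hb, hl⟩ := (hcut r hr.1).exists_isLink
      (fun u hu => ⟨hDW hu, fun h => hr.2 (h ▸ hu)⟩) hne ⟨s, ⟨hs.1, hsr⟩, hs.2⟩
    exact ⟨b, ⟨hb.1.1, hb.2⟩, hb.1.2, e, a, ha, hl⟩
  obtain ⟨v, ⟨hv, hvr, e, a, ha, hl⟩, hmax⟩ := (Set.toFinite _).exists_maximalFor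
    (fun v => G.reachIn (fun _ => True) (W \ insert v D) r) _ hcand
  refine ⟨v, hv, hvr, hD.insert_of_isLink ha hl, by_contra fun hnot => ?_⟩
  obtain ⟨u, hu, hur, hlink, hss⟩ := hC.exists_reachIn_ssubset hv hr hvr.symm (hcut v hv.1) hnot
  exact hss.2 (hmax ⟨hu, hur, hlink⟩ hss.1)

lemma EdgeConnectedOn.exists_split [Finite V] [Finite E] (hdeg : ∀ v ∈ W, G.degree v ≤ 3)
    (h : G.EdgeConnectedOn W 2) (hz : z ∈ W) (hr : r ∈ W) (hrz : r ≠ z) (hYW : Y ⊆ W)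
    (hzY : z ∉ Y) (hY : 3 ≤ Y.ncard) :
    ∃ D ⊆ W, ∃ t ∈ Y \ D, z ∈ D ∧ r ∉ insert t D ∧ (Y ∩ D).Nonempty ∧ (Y \ insert t D).Nonempty ∧
      G.ConnectedOn (insert t D) (fun _ => True) ∧ G.ConnectedOn (W \ D) fun _ => True := by
  -- `D` grows from `{z}`, and `t` is the second vertex of `Y` which it takes over.
  obtain ⟨D, ⟨hDW, hzD, hrD, hD, hC, hYD⟩, hmax⟩ := (Set.toFinite {D | D ⊆ W ∧ z ∈ D ∧ r ∉ D ∧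
    G.ConnectedOn D (fun _ => True) ∧ G.ConnectedOn (W \ D) (fun _ => True) ∧
      (Y ∩ D).ncard ≤ 1}).exists_maximal ⟨{z}, Set.singleton_subset_iff.2 hz, rfl, hrz,
    connectedOn_of_subset_reachIn (Set.singleton_subset_iff.2 mem_reachIn_self),
    h.connectedOn_sdiff_singleton hz (hdeg z hz), by simp [hzY]⟩
  have hY' (t : V) : (Y \ insert t D).Nonempty := by
    rw [Set.sdiff_nonempty]
    intro hYD'
    have hsub : Y ⊆ insert t (Y ∩ D) := fun v hv => (hYD' hv).imp_right fun h => ⟨hv, h⟩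
    have := (Set.ncard_le_ncard hsub).trans (Set.ncard_insert_le _ _)
    omega
  obtain ⟨s, hsY, hs⟩ := hY' r
  obtain ⟨t, ht, htr, hD', hC'⟩ := h.exists_connectedOn_insert hdeg hDW ⟨z, hzD⟩ hD hC ⟨hr, hrD⟩
    ⟨s, ⟨hYW hsY, fun h => hs (.inr h)⟩, fun h => hs (.inl h)⟩
  have hrD' : r ∉ insert t D := by
    rintro (h | h)
    exacts [htr h.symm, hrD h]
  have hbig : 1 < (Y ∩ insert t D).ncard := by
    by_contra! hle
    exact ht.2 (hmax ⟨Set.insert_subset ht.1 hDW, .inr hzD, hrD', hD', hC', hle⟩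
      (Set.subset_insert t D) (.inl rfl))
  have htY : t ∈ Y := by
    by_contra htY
    rw [Set.inter_insert_of_notMem htY] at hbig
    omega
  refine ⟨D, hDW, t, ⟨htY, ht.2⟩, hzD, hrD', ?_, hY' t, hD', hC⟩
  rw [Set.inter_insert_of_mem htY] at hbig
  by_contra hempty
  simp [Set.not_nonempty_iff_eq_empty.1 hempty] at hbig

lemma ConnectedOn.reaches_within_sdiff (h : G.ConnectedOn (insert t D) fun _ => True) (ht : t ∉ D)
    (hu : u ∈ insert t D) : G.Reaches (· ∈ G.within (insert t D) \ G.within Dᶜ) t u := by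
  refine (h t (.inl rfl) u hu).mem_of_closed
    (S := {u | G.Reaches (· ∈ G.within (insert t D) \ G.within Dᶜ) t u}) .refl ?_
  rintro e a b ⟨-, he⟩ hl ha
  by_cases heD : e ∈ G.within Dᶜ
  · obtain rfl := (hl.mem_within_iff.1 he).2.resolve_right (hl.mem_within_iff.1 heD).2
    exact .refl
  · exact Reaches.tail ha ⟨he, heD⟩ hl

lemma EdgeConnectedOn.exists_isRootedAt_isRootedAt [Finite V] [Finite E]
    (hdeg : ∀ v ∈ W, G.degree v ≤ 3) (h : G.EdgeConnectedOn W 2) (hz : z ∈ W) (hYW : Y ⊆ W)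
    (hzY : z ∉ Y) (hY : 3 ≤ Y.ncard) :
    ∃ t ∈ Y, ∃ A ⊆ G.within W, ∃ B ⊆ G.within W, G.IsRootedAt A t ∧ G.IsRootedAt B t ∧
      Disjoint A B ∧ z ∈ G.verts A ∧ z ∈ G.verts B ∧
      (∃ y ∈ Y, y ∈ G.verts A \ G.verts B) ∧ ∃ q ∈ Y, q ∈ G.verts B \ G.verts A := by
  obtain ⟨s, hsY⟩ := Set.nonempty_of_ncard_ne_zero (s := Y) (by omega)
  obtain ⟨g, -, z', hz', r, ⟨hr, hrz⟩, hg⟩ := (h.connectedOn (k := 1)).exists_isLink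
    (Set.singleton_subset_iff.2 hz) ⟨z, rfl⟩ ⟨s, hYW hsY, fun h => hzY (h ▸ hsY)⟩
  obtain rfl : z = z' := Eq.symm hz'
  obtain ⟨D, hDW, t, ⟨htY, htD⟩, hzD, hrD, ⟨y, hyY, hyD⟩, ⟨q, hqY, hqD⟩, hD, hC⟩ :=
    h.exists_split hdeg hz hr hrz hYW hzY hY
  set A := G.within (insert t D) \ G.within Dᶜ
  set B := insert g (G.within (W \ D))
  have hrC : r ∈ W \ D := ⟨hr, fun h => hrD (.inr h)⟩
  have hqC : q ∈ W \ D := ⟨hYW hqY, fun h => hqD (.inr h)⟩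
  have htC : t ∈ W \ D := ⟨hYW htY, htD⟩
  have hzt : z ≠ t := fun h => htD (h ▸ hzD)
  have hqt : q ≠ t := fun h => hqD (.inl h)
  have hAD : G.verts A ⊆ insert t D := verts_subset_iff.2 Set.sdiff_subset
  have hBC : G.verts B ⊆ insert z (W \ D) := verts_subset_iff.2 <|
    Set.insert_subset (hg.mem_within_iff.2 ⟨.inl rfl, .inr hrC⟩)
      (within_mono (Set.subset_insert _ _))
  have hA : ∀ u ∈ insert t D, G.Reaches (· ∈ A) t u := fun u hu => hD.reaches_within_sdiff htD hu
  have hB : ∀ u ∈ insert z (W \ D), G.Reaches (· ∈ B) t u := by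
    have hCB : ∀ u ∈ W \ D, G.Reaches (· ∈ B) t u := fun u hu =>
      (hC t htC u hu).mono fun e he => .inr he.2
    rintro u (rfl | hu)
    exacts [(hCB r hrC).tail (.inl rfl) hg.symm, hCB u hu]
  have hAB : Disjoint A B := by
    rw [Set.disjoint_left]
    rintro e ⟨he, heD⟩ (rfl | he')
    exacts [hrD (hg.mem_within_iff.1 he).2, heD (within_mono (fun x hx => hx.2) he')]
  refine ⟨t, htY, A, ?_, B, ?_, .of_forall_reaches hA hAD (.inr hzD) hzt,
    .of_forall_reaches hB hBC (.inl rfl) hzt, hAB, (hA z (.inr hzD)).exists_inc hzt.symm,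
    (hB z (.inl rfl)).exists_inc hzt.symm, ⟨y, hyY, ?_, ?_⟩, ⟨q, hqY, ?_, fun h => hqD (hAD h)⟩⟩
  · exact Set.sdiff_subset.trans (within_mono (Set.insert_subset (hYW htY) hDW))
  · exact verts_subset_iff.1 (hBC.trans (Set.insert_subset hz Set.sdiff_subset))
  · exact (hA y (.inr hyD)).exists_inc fun h => htD (h ▸ hyD)
  · exact fun h => (hBC h).elim (fun h => hzY (h ▸ hyY)) fun h => h.2 hyD
  · exact (hB q (.inr hqC)).exists_inc hqt.symm

/-- There are edge-disjoint peripheral paths in the subgraph induced on `W` from a common boundary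
vertex to two further ones, none of these three vertices being `z`. If `z` lies on the boundary,
then the paths avoid `z`. -/
def HasTwoPeripheralPaths (G : Multigraph V E) (W : Set V) (z : V) : Prop :=
  ∃ y ∈ G.boundary W \ {z}, ∃ y₁ ∈ G.boundary W \ {z}, ∃ y₂ ∈ G.boundary W \ {z},
    y ≠ y₁ ∧ y ≠ y₂ ∧ y₁ ≠ y₂ ∧ ∃ R₁ R₂, Disjoint R₁ R₂ ∧
      G.IsPeripheralPath W y y₁ R₁ ∧ G.IsPeripheralPath W y y₂ R₂

lemma EdgeConnectedOn.hasTwoPeripheralPaths [Finite V] [Finite E] (hdeg : ∀ v ∈ W, G.degree v ≤ 3)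
    (h3 : G.EdgeConnected 3) (h : G.EdgeConnectedOn W 2) (hz : z ∈ W)
    (hY : 3 ≤ (G.boundary W \ {z}).ncard) : G.HasTwoPeripheralPaths W z := by
  have hYW : G.boundary W \ {z} ⊆ W := Set.sdiff_subset.trans boundary_subset
  obtain ⟨t, htY, A, hAW, B, hBW, hA, hB, hAB, hzA, hzB, ⟨y, hyY, hyA, hyB⟩, q, hqY, hqB, hqA⟩ :=
    h.exists_isRootedAt_isRootedAt hdeg hz hYW (fun h => h.2 rfl) hY
  obtain ⟨y₁, ⟨hy₁, hy₁B⟩, R₁, hP₁, hR₁⟩ := h.exists_isPeripheralPath hdeg h3 hBW hB hAW hAB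
    (hA.2 y hyA) ⟨hyY.1, hyB⟩
  have hqR₁ : q ∉ G.verts R₁ := fun hq => by
    rcases hP₁.eq_or_eq_of_mem_boundary hq hqY.1 with rfl | rfl
    exacts [hqA hA.1, hy₁B hqB]
  have hqRA : q ∉ G.verts (R₁ ∪ A) := by
    rintro ⟨e, he | he, hv⟩
    exacts [hqR₁ ⟨e, he, hv⟩, hqA ⟨e, he, hv⟩]
  obtain ⟨y₂, ⟨hy₂, hy₂A⟩, R₂, hP₂, hR₂⟩ := h.exists_isPeripheralPath hdeg h3
    (Set.union_subset hP₁.subset_within hAW) (hP₁.isRootedAt.union hA) hBW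
    (Set.disjoint_union_right.2 ⟨hR₁.symm, hAB.symm⟩) (hB.2 q hqB) ⟨hqY.1, hqRA⟩
  have hy₁R : y₁ ∈ G.verts (R₁ ∪ A) := verts_mono Set.subset_union_left hP₁.right_mem_verts
  have htA : t ∈ G.verts (R₁ ∪ A) := verts_mono Set.subset_union_right hA.1
  have hzA : z ∈ G.verts (R₁ ∪ A) := verts_mono Set.subset_union_right hzA
  exact ⟨t, htY, y₁, ⟨hy₁, fun h => hy₁B (h ▸ hzB)⟩, y₂, ⟨hy₂, fun h => hy₂A (h ▸ hzA)⟩,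
    fun h => hy₁B (h ▸ hB.1), fun h => hy₂A (h ▸ htA), fun h => hy₂A (h ▸ hy₁R), R₁, R₂,
    (Set.disjoint_union_right.1 hR₂).1.symm, hP₁, hP₂⟩

/-! ### Parts behind a bridge -/

variable {f : E}

/-- `W` induces a connected subgraph, the edge `f` joins `z ∈ W` to the complement of `W`, and each
vertex of `W` sends at most one edge other than `f` to the complement. Components as in the theorem
have this property, and it is passed on to the part of `W` behind a bridge. -/
structure IsSparselyAttached (G : Multigraph V E) (W : Set V) (z : V) (f : E) : Prop where
  connectedOn : G.ConnectedOn W fun _ => True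
  mem : z ∈ W
  joins : G.joins f z Wᶜ
  ncard_joins_le : ∀ v ∈ W, {e | e ≠ f ∧ G.joins e v Wᶜ}.ncard ≤ 1

lemma exists_joins_of_mem_cutEdges (he : e ∈ G.cutEdges W) : ∃ v ∈ W, G.joins e v Wᶜ := by
  obtain ⟨a, ha, b, hb, hl⟩ := mem_cutEdges_iff.1 he
  exact ⟨a, ha, hl.joins hb⟩

lemma IsSparselyAttached.exists_ne [Finite V] [Finite E] (h : G.IsSparselyAttached W z f)
    (hG : 3 ≤ (G.cutEdges W).ncard) : ∃ s ∈ W, s ≠ z := by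
  by_contra! hW
  have hsub : G.cutEdges W ⊆ insert f {e | e ≠ f ∧ G.joins e z Wᶜ} := fun e he => by
    obtain ⟨v, hv, hev⟩ := exists_joins_of_mem_cutEdges he
    exact or_iff_not_imp_left.2 fun hef => ⟨hef, hW v hv ▸ hev⟩
  have hcut := (Set.ncard_le_ncard hsub).trans (Set.ncard_insert_le _ _)
  have hz := h.ncard_joins_le z h.mem
  omega

lemma EdgeConnectedOn.eq_of_joins_compl [Finite E] (h : G.EdgeConnectedOn W 2) (hz : z ∈ W)
    (hne : (W \ {z}).Nonempty) (hdeg : G.degree z ≤ 3) (he : G.joins e z Wᶜ)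
    (hf : G.joins f z Wᶜ) : e = f := by
  have hin := h.two_le_ncard_joins hz subset_rfl hne fun _ _ _ _ hb => absurd hb.1 hb.2
  have hsum := G.ncard_joins_add_ncard_joins_le_degree (v := z)
    (disjoint_compl_right.mono_left (Set.sdiff_subset : W \ {z} ⊆ W))
  have hone : {e | G.joins e z Wᶜ}.ncard ≤ 1 := by omega
  exact (Set.ncard_le_one (Set.toFinite _)).1 hone e he f hf

lemma IsSparselyAttached.ncard_cutEdges_le [Finite V] [Finite E] (h : G.IsSparselyAttached W z f)
    (hz : ∀ e, G.joins e z Wᶜ → e = f) :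
    (G.cutEdges W).ncard ≤ (G.boundary W \ {z}).ncard + 1 := by
  have : Nonempty V := ⟨z⟩
  choose! φ hφW hφ using fun e (he : e ∈ G.cutEdges W) => exists_joins_of_mem_cutEdges he
  have hmaps : ∀ e ∈ G.cutEdges W \ {f}, φ e ∈ G.boundary W \ {z} := fun e he =>
    ⟨⟨hφW e he.1, e, hφ e he.1⟩, fun h => he.2 (hz e (h ▸ hφ e he.1))⟩
  have hinj : Set.InjOn φ (G.cutEdges W \ {f}) := fun e he e' he' heq =>
    (Set.ncard_le_one (Set.toFinite _)).1 (h.ncard_joins_le (φ e) (hφW e he.1))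
      e ⟨he.2, hφ e he.1⟩ e' ⟨he'.2, heq ▸ hφ e' he'.1⟩
  have hle := Set.ncard_le_ncard_of_injOn φ hmaps hinj
  have := Set.ncard_le_ncard_sdiff_add_ncard (G.cutEdges W) {f}
  rw [Set.ncard_singleton] at this
  omega

lemma IsSparselyAttached.three_le_ncard_boundary [Finite V] [Finite E]
    (h : G.IsSparselyAttached W z f) (hG : G.Cubic) (hcyc : G.CyclicallyEdgeConnected 4)
    (hWc : 2 ≤ Wᶜ.ncard) (h2 : G.EdgeConnectedOn W 2) : 3 ≤ (G.boundary W \ {z}).ncard := by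
  have hcut := hcyc.le_ncard_cutEdges hG ⟨z, h.mem⟩
    (Set.nonempty_of_ncard_ne_zero (s := Wᶜ) (by omega))
  have hWpos : 0 < W.ncard := (Set.ncard_pos).2 ⟨z, h.mem⟩
  obtain ⟨s, hs, hsz⟩ := h.exists_ne (by omega)
  have hW2 : 1 < W.ncard := (Set.one_lt_ncard).2 ⟨s, hs, z, h.mem, hsz⟩
  have hle := h.ncard_cutEdges_le fun e he =>
    h2.eq_of_joins_compl h.mem ⟨s, hs, hsz⟩ (hG z).le he h.joins
  omega

lemma ConnectedOn.edgeConnectedOn_two [Finite E] (h : G.ConnectedOn W fun _ => True)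
    (hW : ∀ g, G.ConnectedOn W (· ≠ g)) : G.EdgeConnectedOn W 2 := fun S hS => by
  rcases Set.ncard_le_one_iff_subsingleton.1 (Nat.lt_succ_iff.1 hS) |>.eq_empty_or_singleton
    with rfl | ⟨g, rfl⟩
  exacts [h.mono fun _ _ => id, hW g]

lemma IsSparselyAttached.exists_pendant [Finite E] (h : G.IsSparselyAttached W z f)
    (h2 : ¬ G.EdgeConnectedOn W 2) : ∃ B ⊆ W, z ∉ B ∧ ∃ a g, G.IsSparselyAttached B a g ∧
      ∀ e, ∀ u ∈ B, ∀ v ∈ W \ B, G.IsLink e u v → u = a := by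
  obtain ⟨g, hg⟩ : ∃ g, ¬ G.ConnectedOn W (· ≠ g) := by
    by_contra! hW
    exact h2 (h.connectedOn.edgeConnectedOn_two hW)
  set D := G.reachIn (· ≠ g) W z
  have hzD : z ∈ D := mem_reachIn_self
  have hne : (W \ D).Nonempty := Set.sdiff_nonempty.2 fun hWD =>
    hg (connectedOn_of_subset_reachIn hWD)
  have hbridge : ∀ e, ∀ u ∈ W \ D, ∀ v ∈ W \ (W \ D), G.IsLink e u v → e = g := by
    intro e u hu v hv hl
    by_contra he
    exact hu.2 (mem_reachIn_of_isLink (not_not.1 fun h => hv.2 ⟨hv.1, h⟩) he hl.symm hv.1 hu.1)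
  obtain ⟨e, -, a, ha, b, hb, hl⟩ := h.connectedOn.exists_isLink Set.sdiff_subset hne
    ⟨z, h.mem, fun h => h.2 hzD⟩
  obtain rfl := hbridge e a ha b hb hl
  have hend : ∀ e, ∀ u ∈ W \ D, ∀ v ∈ W \ (W \ D), G.IsLink e u v → u = a := by
    intro e u hu v hv hl'
    obtain rfl := hbridge e u hu v hv hl'
    rcases hl'.eq_and_eq_or_eq_and_eq hl with h | h
    exacts [h.1, absurd (h.1 ▸ hu) hb.2]
  refine ⟨W \ D, Set.sdiff_subset, fun h => h.2 hzD, a, e,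
    ⟨h.connectedOn.of_unique_attachment Set.sdiff_subset ha hend, ha, hl.joins hb.2, fun v hv =>
      (Set.ncard_le_ncard ?_).trans (h.ncard_joins_le v hv.1)⟩, hend⟩
  rintro e' ⟨hne', he'⟩
  obtain ⟨w, hw, hl'⟩ := joins_iff.1 he'
  have hwW : w ∉ W := fun hwW => hne' (hbridge e' v hv w ⟨hwW, hw⟩ hl')
  refine ⟨?_, hl'.joins hwW⟩
  rintro rfl
  obtain ⟨x, hx, hfx⟩ := joins_iff.1 h.joins
  rcases hl'.eq_and_eq_or_eq_and_eq hfx with h' | h'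
  exacts [hv.2 (h'.1 ▸ hzD), hx (h'.1 ▸ hv.1)]

lemma IsPeripheralPath.of_subset (h : G.IsPeripheralPath D y y' R) (hDW : D ⊆ W)
    (hW : G.ConnectedOn W fun _ => True) : G.IsPeripheralPath W y y' R := by
  have hRD := h.subset_within
  obtain ⟨n, vs, es, hp, h0, hlast, hR, hvs, hper, hmid⟩ := h
  refine ⟨n, vs, es, hp, h0, hlast, hR, fun i => hDW (hvs i),
    hper.extend hDW hW fun e he heR => he (hRD heR), fun i hi hi' hiW => hmid i hi hi' ?_⟩
  exact ⟨hvs i, hiW.2.imp fun e he => he.mono (Set.compl_subset_compl.2 hDW)⟩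

lemma HasTwoPeripheralPaths.of_pendant (h : G.HasTwoPeripheralPaths D a) (hDW : D ⊆ W)
    (hzD : z ∉ D) (hW : G.ConnectedOn W fun _ => True)
    (hD : ∀ e, ∀ u ∈ D, ∀ v ∈ W \ D, G.IsLink e u v → u = a) : G.HasTwoPeripheralPaths W z := by
  have hsub : G.boundary D \ {a} ⊆ G.boundary W \ {z} := by
    rintro v ⟨⟨hv, e, he⟩, hva⟩
    obtain ⟨w, hw, hl⟩ := joins_iff.1 he
    exact ⟨hl.mem_boundary (hDW hv) fun hwW => hva (hD e v hv w ⟨hwW, hw⟩ hl),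
      fun hvz => hzD (hvz ▸ hv)⟩
  obtain ⟨y, hy, y₁, hy₁, y₂, hy₂, h₁, h₂, h₁₂, R₁, R₂, hR, hP₁, hP₂⟩ := h
  exact ⟨y, hsub hy, y₁, hsub hy₁, y₂, hsub hy₂, h₁, h₂, h₁₂, R₁, R₂, hR, hP₁.of_subset hDW hW,
    hP₂.of_subset hDW hW⟩

theorem IsSparselyAttached.hasTwoPeripheralPaths [Finite V] [Finite E]
    (h : G.IsSparselyAttached W z f) (hG : G.Cubic) (hcyc : G.CyclicallyEdgeConnected 4)
    (hWc : 2 ≤ Wᶜ.ncard) : G.HasTwoPeripheralPaths W z := by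
  induction hn : W.ncard using Nat.strong_induction_on generalizing W z f with
  | _ n ih =>
  by_cases h2 : G.EdgeConnectedOn W 2
  · have : Nonempty V := ⟨z⟩
    exact h2.hasTwoPeripheralPaths (fun v _ => (hG v).le) (hcyc.edgeConnected hG)
      h.mem (h.three_le_ncard_boundary hG hcyc hWc h2)
  · obtain ⟨B, hBW, hzB, a, g, hB, hBa⟩ := h.exists_pendant h2
    have hlt : B.ncard < W.ncard := Set.ncard_lt_ncard ⟨hBW, fun h' => hzB (h' h.mem)⟩
    have hBc : 2 ≤ Bᶜ.ncard := hWc.trans (Set.ncard_le_ncard (Set.compl_subset_compl.2 hBW))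
    exact (ih _ (hn ▸ hlt) hB hBc rfl).of_pendant hBW hzB h.connectedOn hBa

/-! ### Components -/

lemma IsComponent.joins_iff_joins_compl (h : G.IsComponent X W) (hv : v ∈ W) :
    G.joins e v X ↔ G.joins e v Wᶜ := by
  refine ⟨fun he => he.mono fun x hx hxW => Set.disjoint_left.1 h.2.1 hxW hx, fun he => ?_⟩
  obtain ⟨w, hw, hl⟩ := joins_iff.1 he
  exact hl.joins (not_not.1 fun hwX => hw (h.2.2.1 v hv w hwX ⟨e, trivial, hl⟩))

lemma IsComponent.mem_boundary_iff (h : G.IsComponent X W) (hv : v ∈ W) :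
    v ∈ G.boundary W ↔ ∃ e, G.joins e v X := by
  simp only [h.joins_iff_joins_compl hv]
  exact and_iff_right hv

lemma IsComponent.connectedOn (h : G.IsComponent X W) : G.ConnectedOn W fun _ => True := by
  rw [connectedOn_iff_forall_exists_isLink]
  rintro S hS ⟨u, hu⟩ ⟨v, hv, hvS⟩
  obtain ⟨e, a, b, he, ha, hb, hl⟩ := (h.2.2.2 u (hS hu) v hv).exists_exit hu hvS
  have hbX : b ∉ X := ((hl.mem_within_iff (S := Xᶜ)).1 he).2
  exact ⟨e, trivial, a, ha, b, ⟨h.2.2.1 a (hS ha) b hbX ⟨e, trivial, hl⟩, hb⟩, hl⟩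

lemma IsComponent.isSparselyAttached [Finite E] (h : G.IsComponent X W) (hz : z ∈ W)
    (hf : G.joins f z X) (hdeg : ∀ v ∈ W, {e | e ≠ f ∧ G.joins e v X}.ncard ≤ 1) :
    G.IsSparselyAttached W z f where
  connectedOn := h.connectedOn
  mem := hz
  joins := (h.joins_iff_joins_compl hz).1 hf
  ncard_joins_le v hv := by simpa only [h.joins_iff_joins_compl hv] using hdeg v hv

lemma IsPeripheralPath.exists_isPath (h : G.IsPeripheralPath W y y' R) (hW : G.IsComponent X W)
    (hz : z ∈ G.boundary W) (hy : y ≠ z) (hy' : y' ≠ z) :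
    ∃ (n : ℕ) (vs : Fin (n + 1 + 1) → V) (es : Fin (n + 1) → E), Set.range es = R ∧
      G.IsPath vs es ∧ vs 0 = y ∧ vs (Fin.last (n + 1)) = y' ∧ (∀ i, vs i ∈ W ∧ vs i ≠ z) ∧
      G.ConnectedOn W (· ∉ Set.range es) ∧
      ∀ i, i ≠ 0 → i ≠ Fin.last (n + 1) → ∀ e, ¬ G.joins e (vs i) X := by
  have hzR : z ∉ G.verts R := fun hzR => by
    rcases h.eq_or_eq_of_mem_boundary hzR hz with rfl | rfl
    exacts [hy rfl, hy' rfl]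
  obtain ⟨n, vs, es, hp, h0, hlast, rfl, hvs, hper, hinner⟩ := h
  refine ⟨n, vs, es, rfl, hp, h0, hlast, fun i => ⟨hvs i, fun hi => hzR ?_⟩, hper,
    fun i hi hi' e he => hinner i hi hi' ((hW.mem_boundary_iff (hvs i)).2 ⟨e, he⟩)⟩
  exact hp.verts_range ▸ ⟨i, hi⟩

end Multigraph

/-- In a cyclically 4-edge-connected cubic graph `G`, given `X ⊂ V` with `|X| ≥ 2`, a
component `H` of `G − X` (vertex set `W`), and an edge `f = xz` with `x ∈ X`, `z ∈ W`,
if `|E(v,X) \ {f}| ≤ 1` for every `v ∈ W`, then there are distinct vertices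
`y, y₁, y₂ ∈ W \ {z}`, each sending an edge to `X`, and for `i = 1,2` a path
`Pᵢ ⊆ H − z` from `y` to `yᵢ` that is peripheral in `H` and has no internal vertex with
a neighbour in `X`; moreover `P₁` and `P₂` use different edges at `y`. -/
theorem two_peripheral_paths_lemma {V E : Type} [Fintype V] [Fintype E]
    (G : Multigraph V E) (hcubic : G.Cubic) (hcyc : G.CyclicallyEdgeConnected 4)
    (X : Set V) (hX2 : 2 ≤ X.ncard) (hXproper : X ≠ Set.univ)
    (W : Set V) (hW : G.IsComponent X W)
    (f : E) (x z : V) (hx : x ∈ X) (hz : z ∈ W)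
    (hf : (G.src f = x ∧ G.tgt f = z) ∨ (G.src f = z ∧ G.tgt f = x))
    (hdeg : ∀ v ∈ W, ({e : E | e ≠ f ∧ G.joins e v X}).ncard ≤ 1) :
    ∃ y y₁ y₂ : V, y ∈ W ∧ y₁ ∈ W ∧ y₂ ∈ W ∧
      y ≠ z ∧ y₁ ≠ z ∧ y₂ ≠ z ∧ y ≠ y₁ ∧ y ≠ y₂ ∧ y₁ ≠ y₂ ∧
      (∃ e : E, G.joins e y X) ∧ (∃ e : E, G.joins e y₁ X) ∧ (∃ e : E, G.joins e y₂ X) ∧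
      ∃ (n₁ n₂ : ℕ) (vs₁ : Fin (n₁ + 1 + 1) → V) (es₁ : Fin (n₁ + 1) → E)
        (vs₂ : Fin (n₂ + 1 + 1) → V) (es₂ : Fin (n₂ + 1) → E),
        G.IsPath vs₁ es₁ ∧ G.IsPath vs₂ es₂ ∧
        vs₁ 0 = y ∧ vs₁ (Fin.last (n₁ + 1)) = y₁ ∧
        vs₂ 0 = y ∧ vs₂ (Fin.last (n₂ + 1)) = y₂ ∧
        (∀ i, vs₁ i ∈ W ∧ vs₁ i ≠ z) ∧ (∀ i, vs₂ i ∈ W ∧ vs₂ i ≠ z) ∧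
        G.ConnectedOn W (fun e => e ∉ Set.range es₁) ∧
        G.ConnectedOn W (fun e => e ∉ Set.range es₂) ∧
        (∀ i : Fin (n₁ + 1 + 1), i ≠ 0 → i ≠ Fin.last (n₁ + 1) →
          ∀ e : E, ¬ G.joins e (vs₁ i) X) ∧
        (∀ i : Fin (n₂ + 1 + 1), i ≠ 0 → i ≠ Fin.last (n₂ + 1) →
          ∀ e : E, ¬ G.joins e (vs₂ i) X) ∧
        es₁ 0 ≠ es₂ 0 := by
  have hfX : G.joins f z X := (Multigraph.IsLink.symm hf).joins hx
  have hWX : X ⊆ Wᶜ := Set.subset_compl_iff_disjoint_left.2 hW.2.1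
  have hWc : 2 ≤ Wᶜ.ncard := hX2.trans (Set.ncard_le_ncard hWX)
  have hzW : z ∈ G.boundary W := (hW.mem_boundary_iff hz).2 ⟨f, hfX⟩
  obtain ⟨y, ⟨hy, hyz⟩, y₁, ⟨hy₁, hy₁z⟩, y₂, ⟨hy₂, hy₂z⟩, h₁, h₂, h₁₂, R₁, R₂, hR, hP₁, hP₂⟩ :=
    (hW.isSparselyAttached hz hfX hdeg).hasTwoPeripheralPaths hcubic hcyc hWc
  obtain ⟨n₁, vs₁, es₁, rfl, hp₁, hs₁, ht₁, hvs₁, hper₁, hin₁⟩ := hP₁.exists_isPath hW hzW hyz hy₁z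
  obtain ⟨n₂, vs₂, es₂, rfl, hp₂, hs₂, ht₂, hvs₂, hper₂, hin₂⟩ := hP₂.exists_isPath hW hzW hyz hy₂z
  exact ⟨y, y₁, y₂, hy.1, hy₁.1, hy₂.1, hyz, hy₁z, hy₂z, h₁, h₂, h₁₂,
    (hW.mem_boundary_iff hy.1).1 hy, (hW.mem_boundary_iff hy₁.1).1 hy₁,
    (hW.mem_boundary_iff hy₂.1).1 hy₂, n₁, n₂, vs₁, es₁, vs₂, es₂, hp₁, hp₂, hs₁, ht₁, hs₂, ht₂,
    hvs₁, hvs₂, hper₁, hper₂, hin₁, hin₂,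
    fun h => Set.disjoint_left.1 hR ⟨0, rfl⟩ ⟨0, h.symm⟩⟩
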